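/- arXiv:2403.04497 — 2 statements merged into one kernel-verified Lean document; each statement's English description precedes it below -/
import Mathlib

section
/- Let L, M be o-lattices with εL ⊆ M ⊆ L = L^♯, Q(M, M) ⊆ m, and dim_k(M/εL) = a. Then there exists an o-basis {v_1, …, v_D} of L such that Q(v_i, v_j) = δ_{i, D+1−j} and {v_1, …, v_a, ε v_{a+1}, …, ε v_D} is an o-basis of M. -/
noncomputable section

open scoped Classical

/-- The ring of integers `o = k[[ε]]` viewed as a subset of `F = k((ε))`. -/
def Oset (k : Type*) [Field k] : Set (LaurentSeries k) :=
  Set.range (HahnSeries.ofPowerSeries ℤ k)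

/-- The uniformizer `ε` of `k((ε))`. -/
def eps (k : Type*) [Field k] : LaurentSeries k := HahnSeries.single 1 1

/-- An `o`-lattice in `V = F^D`: the `o`-span of an `F`-basis of `V`. -/
def IsLat {k : Type*} [Field k] {D : ℕ} (L : Set (Fin D → LaurentSeries k)) : Prop :=
  ∃ b : Fin D → (Fin D → LaurentSeries k),
    LinearIndependent (LaurentSeries k) b ∧
    L = {v | ∃ c : Fin D → LaurentSeries k, (∀ i, c i ∈ Oset k) ∧ v = ∑ i, c i • b i}

/-- The dual lattice `L^♯ = {v ∈ V | Q(v, L) ⊆ o}`. -/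
def sharp {k : Type*} [Field k] {D : ℕ}
    (Q : LinearMap.BilinForm (LaurentSeries k) (Fin D → LaurentSeries k))
    (L : Set (Fin D → LaurentSeries k)) : Set (Fin D → LaurentSeries k) :=
  {v | ∀ x ∈ L, Q v x ∈ Oset k}


/-- The maximal ideal `m = ε·o` viewed as a subset of `F`. -/
def mSet (k : Type*) [Field k] : Set (LaurentSeries k) :=
  {y | ∃ z ∈ Oset k, y = eps k * z}

/-- The `m`-dual lattice `L^∗ = {v ∈ V | Q(v, L) ⊆ m}`. -/
def mstar {k : Type*} [Field k] {D : ℕ}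
    (Q : LinearMap.BilinForm (LaurentSeries k) (Fin D → LaurentSeries k))
    (L : Set (Fin D → LaurentSeries k)) : Set (Fin D → LaurentSeries k) :=
  {v | ∀ x ∈ L, Q v x ∈ mSet k}

/-- `w` is a `k`-basis of the quotient `M/N` of lattices `N ⊆ M`: representatives of a
basis of the finite-dimensional `k`-vector space `M/N`. -/
def IsQuotBasis {k : Type*} [Field k] {D a : ℕ}
    (N M : Set (Fin D → LaurentSeries k)) (w : Fin a → (Fin D → LaurentSeries k)) : Prop :=
  (∀ i, w i ∈ M) ∧
    (∀ x ∈ M, ∃ c : Fin a → k,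
      x - ∑ i, (HahnSeries.C (c i) : LaurentSeries k) • w i ∈ N) ∧
    (∀ c : Fin a → k, (∑ i, (HahnSeries.C (c i) : LaurentSeries k) • w i) ∈ N → c = 0)

open WithZero in
theorem mem_O_iff {k : Type*} [Field k] (z : LaurentSeries k) :
    z ∈ Oset k ↔ (Valued.v z : ℤᵐ⁰) ≤ 1 := by
  rw [LaurentSeries.val_le_one_iff_eq_coe]; rfl

theorem eps_ne {k : Type*} [Field k] : eps k ≠ 0 := by
  simp [eps]

open WithZero in
theorem v_eps {k : Type*} [Field k] : (Valued.v (eps k) : ℤᵐ⁰) = exp (-1 : ℤ) := by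
  have := LaurentSeries.valuation_single_zpow k 1
  simpa [eps] using this

open WithZero in
theorem mem_m_iff {k : Type*} [Field k] (z : LaurentSeries k) :
    z ∈ mSet k ↔ (Valued.v z : ℤᵐ⁰) < 1 := by
  have hz : z = eps k * (z / eps k) := by field_simp [eps_ne (k := k)]
  have h1 : z ∈ mSet k ↔ z / eps k ∈ Oset k := by
    constructor
    · rintro ⟨y, hy, rfl⟩
      rwa [mul_div_cancel_left₀ _ eps_ne]
    · intro h
      exact ⟨_, h, hz⟩
  rw [h1, mem_O_iff, map_div₀, v_eps]
  by_cases h0 : (Valued.v z : ℤᵐ⁰) = 0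
  · simp [h0]
  · rw [div_le_iff₀ (by simp), one_mul]
    rw [← exp_log h0, exp_le_exp, ← exp_zero, exp_lt_exp]
    omega

section ring
variable {k : Type*} [Field k] {x y z : LaurentSeries k}

theorem O_zero : (0 : LaurentSeries k) ∈ Oset k := by rw [mem_O_iff]; simp
theorem O_one : (1 : LaurentSeries k) ∈ Oset k := by rw [mem_O_iff]; simp
theorem O_add (hx : x ∈ Oset k) (hy : y ∈ Oset k) : x + y ∈ Oset k := by
  obtain ⟨a, rfl⟩ := hx; obtain ⟨b, rfl⟩ := hy; exact ⟨a + b, map_add _ _ _⟩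
theorem O_mul (hx : x ∈ Oset k) (hy : y ∈ Oset k) : x * y ∈ Oset k := by
  obtain ⟨a, rfl⟩ := hx; obtain ⟨b, rfl⟩ := hy; exact ⟨a * b, map_mul _ _ _⟩
theorem O_neg (hx : x ∈ Oset k) : -x ∈ Oset k := by
  obtain ⟨a, rfl⟩ := hx; exact ⟨-a, map_neg _ _⟩
theorem O_sub (hx : x ∈ Oset k) (hy : y ∈ Oset k) : x - y ∈ Oset k := by
  obtain ⟨a, rfl⟩ := hx; obtain ⟨b, rfl⟩ := hy; exact ⟨a - b, map_sub _ _ _⟩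
theorem O_sum {ι : Type*} (s : Finset ι) (f : ι → LaurentSeries k) (h : ∀ i ∈ s, f i ∈ Oset k) :
    ∑ i ∈ s, f i ∈ Oset k := by
  have : ∀ i : s, ∃ p, HahnSeries.ofPowerSeries ℤ k p = f i := fun i => h i i.2
  choose p hp using this
  refine ⟨∑ i, p i, ?_⟩
  rw [map_sum, ← Finset.sum_coe_sort s]
  simp [hp]
theorem O_C (c : k) : (HahnSeries.C c : LaurentSeries k) ∈ Oset k :=
  ⟨PowerSeries.C c, by simp⟩
theorem m_O (hx : x ∈ mSet k) : x ∈ Oset k := by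
  rw [mem_m_iff] at hx; rw [mem_O_iff]; exact hx.le
theorem m_eps (hx : x ∈ Oset k) : eps k * x ∈ mSet k := ⟨x, hx, rfl⟩
theorem m_zero : (0 : LaurentSeries k) ∈ mSet k := by rw [mem_m_iff]; simp
theorem m_add (hx : x ∈ mSet k) (hy : y ∈ mSet k) : x + y ∈ mSet k := by
  obtain ⟨a, ha, rfl⟩ := hx; obtain ⟨b, hb, rfl⟩ := hy
  exact ⟨a + b, O_add ha hb, by ring⟩
theorem m_sub (hx : x ∈ mSet k) (hy : y ∈ mSet k) : x - y ∈ mSet k := by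
  obtain ⟨a, ha, rfl⟩ := hx; obtain ⟨b, hb, rfl⟩ := hy
  exact ⟨a - b, O_sub ha hb, by ring⟩
theorem m_mul (hx : x ∈ Oset k) (hy : y ∈ mSet k) : x * y ∈ mSet k := by
  obtain ⟨b, hb, rfl⟩ := hy
  exact ⟨x * b, O_mul hx hb, by ring⟩
theorem m_mul' (hx : x ∈ mSet k) (hy : y ∈ Oset k) : x * y ∈ mSet k := by
  rw [mul_comm]; exact m_mul hy hx
theorem inv_O (hx : x ∈ Oset k) (hx' : x ∉ mSet k) : x⁻¹ ∈ Oset k ∧ x ≠ 0 := by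
  constructor
  · rw [mem_m_iff] at hx'
    rw [mem_O_iff, map_inv₀]
    exact inv_le_one_of_one_le₀ (not_lt.1 hx')
  · rintro rfl; exact hx' m_zero
theorem sq_O (hx : x * x ∈ Oset k) : x ∈ Oset k := by
  rw [mem_O_iff, map_mul] at *
  by_contra h
  push Not at h
  exact absurd hx (not_le.2 (one_lt_mul'' h h))
theorem one_not_m : (1 : LaurentSeries k) ∉ mSet k := by rw [mem_m_iff]; simp
theorem unit_add (hx : x ∈ mSet k) : 1 + x ∉ mSet k := by
  intro h
  apply one_not_m (k := k)
  have := m_sub h hx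
  simpa using this
theorem C_m {c : k} (h : (HahnSeries.C c : LaurentSeries k) ∈ mSet k) : c = 0 := by
  by_contra hc
  apply one_not_m (k := k)
  have := m_mul (O_C c⁻¹) h
  rwa [← map_mul, inv_mul_cancel₀ hc, map_one] at this

/-- residue -/
theorem exists_res (hx : x ∈ Oset k) : x - HahnSeries.C (x.coeff 0) ∈ mSet k := by
  obtain ⟨p, rfl⟩ := hx
  obtain ⟨q, hq⟩ : PowerSeries.X ∣ p - PowerSeries.C (PowerSeries.constantCoeff p) := by
    rw [PowerSeries.X_dvd_iff]; simp
  refine ⟨HahnSeries.ofPowerSeries ℤ k q, ⟨q, rfl⟩, ?_⟩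
  have h := congrArg (HahnSeries.ofPowerSeries ℤ k) hq
  have h0 : (HahnSeries.ofPowerSeries ℤ k p).coeff 0 = PowerSeries.constantCoeff p := by
    have := LaurentSeries.coeff_coe_powerSeries p 0
    simpa using this
  rw [h0]
  simpa [eps] using h

theorem coeff_m (hx : x ∈ mSet k) : x.coeff 0 = 0 := by
  apply C_m
  have := m_sub hx (exists_res (m_O hx))
  simpa using this

theorem hensel (hk : (2 : k) ≠ 0) {c d : LaurentSeries k} (hc : c ∈ mSet k) (hd : d ∈ Oset k) :
    ∃ t ∈ mSet k, c + 2 * t + t * t * d = 0 := by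
  have h2 : (2 : LaurentSeries k) = HahnSeries.C (2 : k) := by
    exact (map_ofNat _ 2).symm
  have h2' : (2 : LaurentSeries k) ≠ 0 := by rw [h2]; simpa using hk
  have hi : (2 : LaurentSeries k)⁻¹ ∈ Oset k := by
    have : (2 : LaurentSeries k)⁻¹ = HahnSeries.C (2 : k)⁻¹ := by
      rw [h2, map_inv₀]
    rw [this]; exact O_C _
  have hu : d * c * (2⁻¹ * 2⁻¹) ∈ mSet k := m_mul' (m_mul hd hc) (O_mul hi hi)
  obtain ⟨_, ⟨q, rfl⟩, hq⟩ := hu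
  have hs : PowerSeries.HasSubst (PowerSeries.X * q : PowerSeries k) :=
    PowerSeries.HasSubst.of_constantCoeff_zero' (by simp)
  have key := congrArg (fun f => PowerSeries.subst (PowerSeries.X * q : PowerSeries k)
    (PowerSeries.map (Nat.castRingHom k) f)) PowerSeries.catalanSeries_sq_mul_X_add_one
  simp only [map_add, map_mul, map_pow, map_one, PowerSeries.map_X] at key
  rw [← PowerSeries.coe_substAlgHom hs] at key
  simp only [map_add, map_mul, map_pow, map_one] at key
  set s := PowerSeries.substAlgHom hs
    (PowerSeries.map (Nat.castRingHom k) PowerSeries.catalanSeries)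
  have hX : PowerSeries.substAlgHom hs (PowerSeries.X : PowerSeries k) = PowerSeries.X * q := by
    rw [PowerSeries.coe_substAlgHom hs, PowerSeries.subst_X hs]
  rw [hX] at key
  have key2 := congrArg (HahnSeries.ofPowerSeries ℤ k) key
  have e : HahnSeries.ofPowerSeries ℤ k (PowerSeries.X * q) = d * c * (2⁻¹ * 2⁻¹) := by
    rw [hq, map_mul]; simp [eps]
  erw [map_add, map_mul, map_pow, map_one, e] at key2
  set S : LaurentSeries k := HahnSeries.ofPowerSeries ℤ k s
  refine ⟨-(c * 2⁻¹ * S), ?_, ?_⟩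
  · rw [← neg_mul]
    refine m_mul' ?_ ⟨s, rfl⟩
    rw [← zero_sub]
    exact m_sub m_zero (m_mul' hc hi)
  · have h3 : c * S = c * (S ^ 2 * (d * c * (2⁻¹ * 2⁻¹)) + 1) := by
      congr 1; exact key2.symm
    field_simp at h3 ⊢
    linear_combination (-1) * h3
end ring
section lat
variable {k : Type*} [Field k] {D : ℕ}
  {Q : LinearMap.BilinForm (LaurentSeries k) (Fin D → LaurentSeries k)}
  {L M : Set (Fin D → LaurentSeries k)}

theorem L_mem (hself : L = sharp Q L) {x : Fin D → LaurentSeries k} :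
    x ∈ L ↔ ∀ y ∈ L, Q x y ∈ Oset k := by
  conv_lhs => rw [hself]
  rfl

theorem L_Q (hself : L = sharp Q L) {x y : Fin D → LaurentSeries k} (hx : x ∈ L) (hy : y ∈ L) :
    Q x y ∈ Oset k := (L_mem hself).1 hx y hy

theorem L_add (hself : L = sharp Q L) {x y : Fin D → LaurentSeries k} (hx : x ∈ L) (hy : y ∈ L) :
    x + y ∈ L := by
  rw [L_mem hself]
  intro z hz
  simpa using O_add (L_Q hself hx hz) (L_Q hself hy hz)

theorem L_sub (hself : L = sharp Q L) {x y : Fin D → LaurentSeries k} (hx : x ∈ L) (hy : y ∈ L) :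
    x - y ∈ L := by
  rw [L_mem hself]
  intro z hz
  simpa using O_sub (L_Q hself hx hz) (L_Q hself hy hz)

theorem L_smul (hself : L = sharp Q L) {x : Fin D → LaurentSeries k} {c : LaurentSeries k}
    (hc : c ∈ Oset k) (hx : x ∈ L) : c • x ∈ L := by
  rw [L_mem hself]
  intro z hz
  simpa using O_mul hc (L_Q hself hx hz)

theorem L_sum (hself : L = sharp Q L) {ι : Type*} (s : Finset ι) (f : ι → Fin D → LaurentSeries k)
    (h : ∀ i ∈ s, f i ∈ L) : ∑ i ∈ s, f i ∈ L := by
  rw [L_mem hself]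
  intro z hz
  rw [map_sum, LinearMap.sum_apply]
  exact O_sum _ _ fun i hi => L_Q hself (h i hi) hz

theorem M_add (hM : IsLat M) {x y : Fin D → LaurentSeries k} (hx : x ∈ M) (hy : y ∈ M) :
    x + y ∈ M := by
  obtain ⟨b, -, rfl⟩ := hM
  obtain ⟨c, hc, rfl⟩ := hx
  obtain ⟨d, hd, rfl⟩ := hy
  exact ⟨c + d, fun i => O_add (hc i) (hd i), by simp [add_smul, Finset.sum_add_distrib]⟩

theorem M_smul (hM : IsLat M) {x : Fin D → LaurentSeries k} {c : LaurentSeries k}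
    (hc : c ∈ Oset k) (hx : x ∈ M) : c • x ∈ M := by
  obtain ⟨b, -, rfl⟩ := hM
  obtain ⟨d, hd, rfl⟩ := hx
  exact ⟨c • d, fun i => O_mul hc (hd i), by simp [Finset.smul_sum, mul_smul]⟩

theorem M_sub (hM : IsLat M) {x y : Fin D → LaurentSeries k} (hx : x ∈ M) (hy : y ∈ M) :
    x - y ∈ M := by
  have := M_add hM hx (M_smul hM (O_neg O_one) hy)
  simpa [sub_eq_add_neg] using this

theorem M_sum (hM : IsLat M) {ι : Type*} (s : Finset ι) (f : ι → Fin D → LaurentSeries k)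
    (h : ∀ i ∈ s, f i ∈ M) : ∑ i ∈ s, f i ∈ M := by
  have h0 : (0 : Fin D → LaurentSeries k) ∈ M := by
    obtain ⟨b, -, rfl⟩ := hM
    exact ⟨0, fun i => O_zero, by simp⟩
  induction s using Finset.induction_on with
  | empty => simpa using h0
  | insert a s ha ih =>
    rw [Finset.sum_insert ha]
    exact M_add hM (h _ (by simp)) (ih fun i hi => h i (by simp [hi]))

/-- membership in `εL` -/
theorem eL_mem (hself : L = sharp Q L) {x : Fin D → LaurentSeries k} :
    x ∈ (fun v => eps k • v) '' L ↔ ∀ y ∈ L, Q x y ∈ mSet k := by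
  constructor
  · rintro ⟨z, hz, rfl⟩ y hy
    simpa using m_eps (L_Q hself hz hy)
  · intro h
    refine ⟨(eps k)⁻¹ • x, ?_, ?_⟩
    · rw [L_mem hself]
      intro y hy
      obtain ⟨z, hz, e⟩ := h y hy
      simpa [e, eps_ne] using hz
    · simp [smul_smul, eps_ne]

/-- partial hyperbolic family -/
structure Hyp (Q : LinearMap.BilinForm (LaurentSeries k) (Fin D → LaurentSeries k))
    (L : Set (Fin D → LaurentSeries k)) (r : ℕ) (v v' : ℕ → Fin D → LaurentSeries k) : Prop where
  vL : ∀ i < r, v i ∈ L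
  wL : ∀ i < r, v' i ∈ L
  vv : ∀ i < r, ∀ j < r, Q (v i) (v j) = 0
  ww : ∀ i < r, ∀ j < r, Q (v' i) (v' j) = 0
  vw : ∀ i < r, ∀ j < r, Q (v i) (v' j) = if i = j then 1 else 0

/-- projection off the hyperbolic part -/
def pj (Q : LinearMap.BilinForm (LaurentSeries k) (Fin D → LaurentSeries k))
    (r : ℕ) (v v' : ℕ → Fin D → LaurentSeries k) (x : Fin D → LaurentSeries k) :
    Fin D → LaurentSeries k :=
  x - ∑ i ∈ Finset.range r, Q x (v' i) • v i - ∑ i ∈ Finset.range r, Q x (v i) • v' i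

variable {r : ℕ} {v v' : ℕ → Fin D → LaurentSeries k}

theorem Q_pj (x z : Fin D → LaurentSeries k) (h1 : ∀ i < r, Q (v i) z = 0)
    (h2 : ∀ i < r, Q (v' i) z = 0) : Q (pj Q r v v' x) z = Q x z := by
  simp only [pj, map_sub, LinearMap.sub_apply, map_sum, LinearMap.sum_apply, map_smul,
    LinearMap.smul_apply]
  rw [Finset.sum_eq_zero, Finset.sum_eq_zero]
  · simp
  · intro i hi; simp [h2 i (Finset.mem_range.1 hi)]
  · intro i hi; simp [h1 i (Finset.mem_range.1 hi)]

theorem pj_v (hsymm : ∀ x y, Q x y = Q y x) (H : Hyp Q L r v v') (x : Fin D → LaurentSeries k) {j : ℕ} (hj : j < r) :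
    Q (pj Q r v v' x) (v j) = 0 := by
  simp only [pj, map_sub, LinearMap.sub_apply, map_sum, LinearMap.sum_apply, map_smul,
    LinearMap.smul_apply]
  rw [Finset.sum_eq_zero, Finset.sum_eq_single j]
  · simp [hsymm (v' j), H.vw j hj j hj]
  · intro i hi hij
    simp [hsymm (v' i), H.vw j hj i (Finset.mem_range.1 hi), hij.symm]
  · simp [hj]
  · intro i hi; simp [H.vv i (Finset.mem_range.1 hi) j hj]

theorem pj_w (H : Hyp Q L r v v') (x : Fin D → LaurentSeries k) {j : ℕ} (hj : j < r) :
    Q (pj Q r v v' x) (v' j) = 0 := by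
  simp only [pj, map_sub, LinearMap.sub_apply, map_sum, LinearMap.sum_apply, map_smul,
    LinearMap.smul_apply]
  rw [Finset.sum_eq_single j, Finset.sum_eq_zero]
  · simp [H.vw j hj j hj]
  · intro i hi; simp [H.ww i (Finset.mem_range.1 hi) j hj]
  · intro i hi hij
    simp [H.vw i (Finset.mem_range.1 hi) j hj, hij]
  · simp [hj]

theorem pj_L (hself : L = sharp Q L) (H : Hyp Q L r v v') {x : Fin D → LaurentSeries k}
    (hx : x ∈ L) : pj Q r v v' x ∈ L := by
  refine L_sub hself (L_sub hself hx (L_sum hself _ _ fun i hi => ?_))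
    (L_sum hself _ _ fun i hi => ?_)
  · have := Finset.mem_range.1 hi
    exact L_smul hself (L_Q hself hx (H.wL i this)) (H.vL i this)
  · have := Finset.mem_range.1 hi
    exact L_smul hself (L_Q hself hx (H.vL i this)) (H.wL i this)

theorem Hyp.ext (hsymm : ∀ x y, Q x y = Q y x) (H : Hyp Q L r v v') {x x' : Fin D → LaurentSeries k}
    (hx : x ∈ L) (hx' : x' ∈ L) (h1 : Q x x = 0) (h2 : Q x' x' = 0) (h3 : Q x x' = 1)
    (xv : ∀ i < r, Q x (v i) = 0) (xw : ∀ i < r, Q x (v' i) = 0)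
    (xv' : ∀ i < r, Q x' (v i) = 0) (xw' : ∀ i < r, Q x' (v' i) = 0) :
    Hyp Q L (r + 1) (Function.update v r x) (Function.update v' r x') := by
  have key : ∀ i < r + 1, i < r ∧ i ≠ r ∨ i = r := by intro i hi; omega
  constructor
  · intro i hi
    rcases key i hi with ⟨h, h'⟩ | rfl
    · simpa [h'] using H.vL i h
    · simpa using hx
  · intro i hi
    rcases key i hi with ⟨h, h'⟩ | rfl
    · simpa [h'] using H.wL i h
    · simpa using hx'
  · intro i hi j hj
    rcases key i hi with ⟨h, h'⟩ | rfl <;> rcases key j hj with ⟨g, g'⟩ | rfl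
    · simpa [h', g'] using H.vv i h j g
    · simpa [h'] using (hsymm _ _).trans (xv i h)
    · simpa [g'] using xv j g
    · simpa using h1
  · intro i hi j hj
    rcases key i hi with ⟨h, h'⟩ | rfl <;> rcases key j hj with ⟨g, g'⟩ | rfl
    · simpa [h', g'] using H.ww i h j g
    · simpa [h'] using (hsymm _ _).trans (xw' i h)
    · simpa [g'] using xw' j g
    · simpa using h2
  · intro i hi j hj
    rcases key i hi with ⟨h, h'⟩ | rfl <;> rcases key j hj with ⟨g, g'⟩ | rfl
    · simpa [h', g'] using H.vw i h j g
    · simpa [h'] using (hsymm _ _).trans (xv' i h)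
    · simpa [g', g'.symm] using xw j g
    · simpa using h3

theorem two_facts (hk : (2 : k) ≠ 0) :
    (2 : LaurentSeries k) ≠ 0 ∧ (2 : LaurentSeries k)⁻¹ ∈ Oset k := by
  have h2 : (2 : LaurentSeries k) = HahnSeries.C (2 : k) := (map_ofNat _ 2).symm
  constructor
  · rw [h2]; simpa using hk
  · rw [h2, ← map_inv₀]; exact O_C _

theorem Hyp.pair (hk : (2 : k) ≠ 0) (hsymm : ∀ x y, Q x y = Q y x) (hself : L = sharp Q L)
    (H : Hyp Q L r v v') {x y : Fin D → LaurentSeries k}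
    (hx : x ∈ L) (hy : y ∈ L) (h1 : Q x x = 0) (h3 : Q x y = 1)
    (xv : ∀ i < r, Q x (v i) = 0) (xw : ∀ i < r, Q x (v' i) = 0) :
    ∃ x', Hyp Q L (r + 1) (Function.update v r x) (Function.update v' r x') := by
  obtain ⟨t1, t2⟩ := two_facts hk
  have hp : pj Q r v v' y ∈ L := pj_L hself H hy
  have hpx : Q x (pj Q r v v' y) = 1 := by
    rw [hsymm, Q_pj, hsymm, h3]
    · intro i hi; rw [hsymm, xv i hi]
    · intro i hi; rw [hsymm, xw i hi]
  have hpx' : Q (pj Q r v v' y) x = 1 := by rw [hsymm, hpx]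
  refine ⟨pj Q r v v' y - (2⁻¹ * Q (pj Q r v v' y) (pj Q r v v' y)) • x, ?_⟩
  refine H.ext hsymm hx (L_sub hself hp (L_smul hself (O_mul t2 (L_Q hself hp hp)) hx)) h1
    ?_ ?_ xv xw ?_ ?_
  · simp only [map_sub, LinearMap.sub_apply, map_smul, LinearMap.smul_apply, smul_eq_mul, hpx,
      hpx', h1]
    field_simp
    ring
  · simp [hpx, h1]
  · intro i hi
    simp [pj_v hsymm H y hi, xv i hi]
  · intro i hi
    simp [pj_w H y hi, xw i hi]

theorem Hyp.stepM (hk : (2 : k) ≠ 0) (hsymm : ∀ x y, Q x y = Q y x) (hself : L = sharp Q L)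
    (hM : IsLat M) (h1 : (fun v => eps k • v) '' L ⊆ M) (h2 : M ⊆ L)
    (hMM : ∀ x ∈ M, ∀ y ∈ M, Q x y ∈ mSet k)
    (H : Hyp Q L r v v') {x : Fin D → LaurentSeries k}
    (hx : x ∈ M) (hx' : x ∉ (fun v => eps k • v) '' L)
    (xv : ∀ i < r, Q x (v i) = 0) (xw : ∀ i < r, Q x (v' i) = 0) :
    ∃ z ∈ M, ∃ x', Hyp Q L (r + 1) (Function.update v r z) (Function.update v' r x') := by
  rw [eL_mem hself] at hx'
  push Not at hx'
  obtain ⟨y0, hy0, hm⟩ := hx'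
  obtain ⟨i1, i2⟩ := inv_O (L_Q hself (h2 hx) hy0) hm
  set y1 := (Q x y0)⁻¹ • y0 with hy1
  have y1L : y1 ∈ L := L_smul hself i1 hy0
  have xy1 : Q x y1 = 1 := by simp [hy1, i2]
  set y := pj Q r v v' y1 with hy
  have yL : y ∈ L := pj_L hself H y1L
  have yx : Q y x = 1 := by
    rw [hy, Q_pj, hsymm, xy1]
    · intro i hi; rw [hsymm, xv i hi]
    · intro i hi; rw [hsymm, xw i hi]
  have xy : Q x y = 1 := by rw [hsymm, yx]
  obtain ⟨t, ht, e⟩ := hensel hk (hMM x hx x hx) (L_Q hself yL yL)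
  have tyM : t • y ∈ M := by
    obtain ⟨s, hs, rfl⟩ := ht
    rw [mul_smul]
    exact h1 ⟨_, L_smul hself hs yL, rfl⟩
  have zM : x + t • y ∈ M := M_add hM hx tyM
  obtain ⟨j1, j2⟩ := inv_O (O_add O_one (O_mul (m_O ht) (L_Q hself yL yL)))
    (unit_add (m_mul' ht (L_Q hself yL yL)))
  refine ⟨x + t • y, zM, ?_⟩
  refine H.pair hk hsymm hself (y := (1 + t * Q y y)⁻¹ • y) (h2 zM) (L_smul hself j1 yL) ?_ ?_ ?_ ?_
  · simp [xy, yx]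
    linear_combination e
  · simp [xy]
    field_simp
  · intro i hi
    simp [xv i hi, hy, pj_v hsymm H y1 hi]
  · intro i hi
    simp [xw i hi, hy, pj_w H y1 hi]

theorem Hyp.stepI (hk : (2 : k) ≠ 0) (hsymm : ∀ x y, Q x y = Q y x) (hself : L = sharp Q L)
    (hL : IsLat L) (hnd : ∀ x, (∀ y, Q x y = 0) → x = 0)
    (H : Hyp Q L r v v') {x : Fin D → LaurentSeries k} (hx : x ≠ 0) (hxx : Q x x = 0)
    (xv : ∀ i < r, Q x (v i) = 0) (xw : ∀ i < r, Q x (v' i) = 0) :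
    ∃ z x', Hyp Q L (r + 1) (Function.update v r z) (Function.update v' r x') := by
  obtain ⟨l, hl, hLl⟩ := hL
  have lL : ∀ i, l i ∈ L := by
    intro i
    rw [hLl]
    refine ⟨Pi.single i 1, fun j => ?_, by simp [Pi.single_apply, ite_smul]⟩
    by_cases h : j = i
    · subst h; simpa using O_one
    · simpa [h] using O_zero
  have hne : ∃ i, Q x (l i) ≠ 0 := by
    by_contra! h
    apply hx
    apply hnd
    intro y
    have : y ∈ Submodule.span (LaurentSeries k) (Set.range l) := by
      rw [hl.span_eq_top_of_card_eq_finrank' (by simp)]; trivial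
    induction this using Submodule.span_induction with
    | mem y hy => obtain ⟨i, rfl⟩ := hy; exact h i
    | zero => simp
    | add a b _ _ ha hb => simp [ha, hb]
    | smul c a _ ha => simp [ha]
  obtain ⟨i1, hi1⟩ := hne
  obtain ⟨i0, -, hi0⟩ := Finset.exists_max_image (Finset.univ : Finset (Fin D))
    (fun i => (Valued.v (Q x (l i)) : WithZero (Multiplicative ℤ))) ⟨i1, Finset.mem_univ _⟩
  have h0 : Q x (l i0) ≠ 0 := by
    intro h
    have := hi0 i1 (Finset.mem_univ _)
    simp [h] at this
    exact hi1 this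
  set z := (Q x (l i0))⁻¹ • x with hz
  have zl : ∀ i, Q z (l i) ∈ Oset k := by
    intro i
    rw [mem_O_iff]
    have hv : 0 < (Valued.v (Q x (l i0)) : WithZero (Multiplicative ℤ)) := by
      simpa [pos_iff_ne_zero] using h0
    simp only [hz, map_smul, LinearMap.smul_apply, smul_eq_mul, map_mul, map_inv₀]
    rw [inv_mul_le_iff₀ hv, mul_one]
    exact hi0 i (Finset.mem_univ _)
  have zL : z ∈ L := by
    rw [L_mem hself]
    intro y hy
    rw [hLl] at hy
    obtain ⟨c, hc, rfl⟩ := hy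
    rw [map_sum]
    refine O_sum _ _ fun i _ => ?_
    simpa using O_mul (hc i) (zl i)
  refine ⟨z, H.pair hk hsymm hself zL (lL i0) ?_ ?_ ?_ ?_⟩
  · simp [hz, hxx]
  · simp [hz, h0]
  · intro i hi; simp [hz, xv i hi]
  · intro i hi; simp [hz, xw i hi]
end lat
section lin
variable {k : Type*} [Field k] {D : ℕ}
  {Q : LinearMap.BilinForm (LaurentSeries k) (Fin D → LaurentSeries k)}
  {L M : Set (Fin D → LaurentSeries k)} {r : ℕ} {v v' : ℕ → Fin D → LaurentSeries k}

theorem rev_iff (i j : Fin D) : (i : ℕ) + (j : ℕ) = D - 1 ↔ i = Fin.rev j := by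
  rw [Fin.ext_iff, Fin.val_rev]; omega

theorem expand {b : Fin D → (Fin D → LaurentSeries k)}
    (hb : ∀ i j, Q (b i) (b j) = if (i : ℕ) + (j : ℕ) = D - 1 then 1 else 0)
    (x : Fin D → LaurentSeries k) : x = ∑ i, Q x (b (Fin.rev i)) • b i := by
  have key : ∀ c : Fin D → LaurentSeries k, ∀ j, Q (∑ i, c i • b i) (b (Fin.rev j)) = c j := by
    intro c j
    simp only [map_sum, LinearMap.sum_apply, map_smul, LinearMap.smul_apply, hb, rev_iff, Fin.rev_rev]
    simp
  have li : LinearIndependent (LaurentSeries k) b := by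
    rw [Fintype.linearIndependent_iff]
    intro g hg i
    rw [← key g i, hg]; simp
  have hs : x ∈ Submodule.span (LaurentSeries k) (Set.range b) := by
    rw [li.span_eq_top_of_card_eq_finrank' (by simp)]; trivial
  obtain ⟨c, rfl⟩ := (Submodule.mem_span_range_iff_exists_fun _).1 hs
  exact Finset.sum_congr rfl fun i _ => by rw [key c i]

theorem nondeg
    (hgram : ∀ i j, Q (Pi.single i 1) (Pi.single j 1) =
      if (i : ℕ) + (j : ℕ) = D - 1 then 1 else 0) (x : Fin D → LaurentSeries k)
    (h : ∀ y, Q x y = 0) : x = 0 := by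
  rw [expand hgram x]
  simp [h]

theorem nondeg' (hsymm : ∀ x y, Q x y = Q y x)
    (hgram : ∀ i j, Q (Pi.single i 1) (Pi.single j 1) =
      if (i : ℕ) + (j : ℕ) = D - 1 then 1 else 0) : Q.Nondegenerate := by
  refine ⟨fun x h => nondeg hgram x h, fun x h => nondeg hgram x fun y => ?_⟩
  rw [hsymm, h]

theorem Hyp.li (H : Hyp Q L r v v') :
    LinearIndependent (LaurentSeries k) (fun i : Fin r => v i) := by
  rw [Fintype.linearIndependent_iff]
  intro g hg i
  have := congrArg (fun x => Q x (v' i)) hg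
  have e : ∀ j : Fin r, Q (v j) (v' i) = if j = i then 1 else 0 := by
    intro j
    rw [H.vw j j.2 i i.2]; simp [Fin.ext_iff]
  simpa [LinearMap.sum_apply, e] using this

/-- span of the isotropic half -/
def Usp (r : ℕ) (v : ℕ → Fin D → LaurentSeries k) :
    Submodule (LaurentSeries k) (Fin D → LaurentSeries k) :=
  Submodule.span _ (Set.range fun i : Fin r => v i)

theorem Hyp.finrank (H : Hyp Q L r v v') :
    Module.finrank (LaurentSeries k) (Usp r v) = r := by
  have := finrank_span_eq_card H.li
  exact this.trans (Fintype.card_fin r)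

theorem orth_span {ι : Type*} (f : ι → Fin D → LaurentSeries k) (x : Fin D → LaurentSeries k) :
    x ∈ Q.orthogonal (Submodule.span _ (Set.range f)) ↔ ∀ i, Q (f i) x = 0 := by
  rw [LinearMap.BilinForm.mem_orthogonal_iff]
  constructor
  · intro h i
    exact h _ (Submodule.subset_span ⟨i, rfl⟩)
  · intro h y hy
    change Q y x = 0
    induction hy using Submodule.span_induction with
    | mem y hy => obtain ⟨i, rfl⟩ := hy; exact h i
    | zero => simp
    | add a b _ _ ha hb => simp [ha, hb]
    | smul c a _ ha => simp [ha]

theorem Hyp.iso (H : Hyp Q L r v v') : Usp r v ≤ Q.orthogonal (Usp r v) := by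
  refine Submodule.span_le.2 ?_
  rintro _ ⟨i, rfl⟩
  refine (orth_span _ _).2 fun j => H.vv j j.2 i i.2

theorem Hyp.bound (hsymm : ∀ x y, Q x y = Q y x)
    (hgram : ∀ i j, Q (Pi.single i 1) (Pi.single j 1) =
      if (i : ℕ) + (j : ℕ) = D - 1 then 1 else 0) (H : Hyp Q L r v v') : 2 * r ≤ D := by
  have h1 := Submodule.finrank_mono H.iso
  have h2 := LinearMap.BilinForm.finrank_orthogonal (nondeg' hsymm hgram) (Usp r v)
  rw [h2, H.finrank] at h1
  simp at h1
  have h3 := Submodule.finrank_le (Usp r v)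
  rw [H.finrank] at h3
  simp at h3
  omega

theorem Hyp.exists_iso (hsymm : ∀ x y, Q x y = Q y x)
    (hgram : ∀ i j, Q (Pi.single i 1) (Pi.single j 1) =
      if (i : ℕ) + (j : ℕ) = D - 1 then 1 else 0) (H : Hyp Q L r v v') (hr : 2 * (r + 1) ≤ D) :
    ∃ x, x ≠ 0 ∧ Q x x = 0 ∧ (∀ i < r, Q x (v i) = 0) ∧ (∀ i < r, Q x (v' i) = 0) := by
  have nd := nondeg' hsymm hgram
  have refl : Q.IsRefl := fun x y h => by rw [hsymm, h]
  let e : Fin (r + 1) → Fin D → LaurentSeries k := fun i => Pi.single ⟨i, by omega⟩ 1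
  have eli : LinearIndependent (LaurentSeries k) e := by
    have h := (Pi.basisFun (LaurentSeries k) (Fin D)).linearIndependent
    have h2 := h.comp (fun i : Fin (r + 1) => (⟨i, by omega⟩ : Fin D))
      (fun i j hij => by simpa [Fin.ext_iff] using hij)
    convert h2 using 1
    ext i : 1
    simp [e]
  set W := Submodule.span (LaurentSeries k) (Set.range e) with hW
  have fW : Module.finrank (LaurentSeries k) W = r + 1 := by
    simpa using finrank_span_eq_card eli
  have isoW : W ≤ Q.orthogonal W := by
    refine Submodule.span_le.2 ?_
    rintro _ ⟨i, rfl⟩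
    refine (orth_span _ _).2 fun j => ?_
    rw [hgram, if_neg]
    simp only
    omega
  set U := Usp r v with hU
  by_cases hc : ∃ w ∈ W ⊓ Q.orthogonal U, w ∉ U
  · obtain ⟨w, ⟨hw1, hw2⟩, hw3⟩ := hc
    have wv : ∀ i < r, Q w (v i) = 0 := by
      intro i hi
      rw [hsymm]
      exact (orth_span _ _).1 hw2 ⟨i, hi⟩
    have ww : Q w w = 0 := isoW hw1 w hw1
    have e1 : pj Q r v v' w = w - ∑ i ∈ Finset.range r, Q w (v' i) • v i := by
      rw [pj, Finset.sum_eq_zero (s := Finset.range r) (f := fun i => Q w (v i) • v' i), sub_zero]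
      intro i hi
      rw [wv i (Finset.mem_range.1 hi), zero_smul]
    refine ⟨pj Q r v v' w, ?_, ?_, fun i hi => pj_v hsymm H w hi, fun i hi => pj_w H w hi⟩
    · intro h
      rw [e1, sub_eq_zero] at h
      apply hw3
      rw [h]
      refine Submodule.sum_mem _ fun i hi => Submodule.smul_mem _ _
        (Submodule.subset_span ⟨⟨i, Finset.mem_range.1 hi⟩, rfl⟩)
    · rw [Q_pj, e1, map_sub, map_sum, ww, Finset.sum_eq_zero, sub_zero]
      · intro i hi
        rw [map_smul, wv i (Finset.mem_range.1 hi), smul_zero]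
      · intro i hi; rw [hsymm, pj_v hsymm H w hi]
      · intro i hi; rw [hsymm, pj_w H w hi]
  · exfalso
    push Not at hc
    have f1 := LinearMap.BilinForm.finrank_orthogonal nd W
    have f2 := LinearMap.BilinForm.finrank_orthogonal nd (Q.orthogonal W ⊔ U)
    have f3 := Submodule.finrank_sup_add_finrank_inf_eq (Q.orthogonal W) U
    have e1 : Q.orthogonal (Q.orthogonal W ⊔ U) ≤ W ⊓ Q.orthogonal U := by
      refine le_inf ?_ (LinearMap.BilinForm.orthogonal_le le_sup_right)
      conv_rhs => rw [← LinearMap.BilinForm.orthogonal_orthogonal nd refl W]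
      exact LinearMap.BilinForm.orthogonal_le le_sup_left
    have f0 := Submodule.finrank_mono e1
    have f4 : Module.finrank (LaurentSeries k) (W ⊓ Q.orthogonal U : Submodule _ _) ≤
        Module.finrank (LaurentSeries k) (Q.orthogonal W ⊓ U : Submodule _ _) :=
      Submodule.finrank_mono fun x hx => ⟨isoW hx.1, hc x hx⟩
    have f5 := H.finrank
    have f6 := Submodule.finrank_le (Q.orthogonal W ⊔ U)
    simp only [Module.finrank_fin_fun] at f1 f2 f6
    rw [← hU] at f5
    omega
end lin
section fin
variable {k : Type*} [Field k] {D : ℕ}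
  {Q : LinearMap.BilinForm (LaurentSeries k) (Fin D → LaurentSeries k)}
  {L M : Set (Fin D → LaurentSeries k)} {r : ℕ} {v v' : ℕ → Fin D → LaurentSeries k}

theorem phase1 (hk : (2 : k) ≠ 0) (hsymm : ∀ x y, Q x y = Q y x)
    (hgram : ∀ i j, Q (Pi.single i 1) (Pi.single j 1) =
      if (i : ℕ) + (j : ℕ) = D - 1 then 1 else 0) (hself : L = sharp Q L)
    (hM : IsLat M) (h1 : (fun v => eps k • v) '' L ⊆ M) (h2 : M ⊆ L)
    (hMM : ∀ x ∈ M, ∀ y ∈ M, Q x y ∈ mSet k) :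
    ∃ r v v', Hyp Q L r v v' ∧ (∀ i < r, v i ∈ M) ∧
      ∀ x ∈ M, (∀ i < r, Q x (v i) = 0) → (∀ i < r, Q x (v' i) = 0) →
        x ∈ (fun v => eps k • v) '' L := by
  by_contra! hcon
  have all : ∀ r, ∃ v v', Hyp Q L r v v' ∧ (∀ i < r, v i ∈ M) := by
    intro r
    induction r with
    | zero => exact ⟨0, 0, ⟨by simp, by simp, by simp, by simp, by simp⟩, by simp⟩
    | succ r ih =>
      obtain ⟨v, v', H, hv⟩ := ih
      obtain ⟨x, hx, xv, xw, hx'⟩ := hcon r v v' H hv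
      obtain ⟨z, hz, x', H'⟩ := H.stepM hk hsymm hself hM h1 h2 hMM hx hx' xv xw
      refine ⟨_, _, H', fun i hi => ?_⟩
      by_cases h : i = r
      · subst h; simpa using hz
      · simpa [h] using hv i (by omega)
  obtain ⟨v, v', H, -⟩ := all (D + 1)
  have := H.bound hsymm hgram
  omega

theorem eL_of (hsymm : ∀ x y, Q x y = Q y x) (hself : L = sharp Q L)
    (hM : IsLat M) (h1 : (fun v => eps k • v) '' L ⊆ M) (h2 : M ⊆ L)
    (hMM : ∀ x ∈ M, ∀ y ∈ M, Q x y ∈ mSet k)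
    (H : Hyp Q L r v v') (hv : ∀ i < r, v i ∈ M)
    (hmax : ∀ x ∈ M, (∀ i < r, Q x (v i) = 0) → (∀ i < r, Q x (v' i) = 0) →
        x ∈ (fun v => eps k • v) '' L) {x : Fin D → LaurentSeries k} (hx : x ∈ M)
    (hxm : ∀ i < r, Q x (v' i) ∈ mSet k) : x ∈ (fun v => eps k • v) '' L := by
  have mM : ∀ c ∈ mSet k, ∀ y ∈ L, c • y ∈ M := by
    rintro _ ⟨c, hc, rfl⟩ y hy
    rw [mul_smul]
    exact h1 ⟨_, L_smul hself hc hy, rfl⟩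
  have hp : pj Q r v v' x ∈ M := by
    refine M_sub hM (M_sub hM hx (M_sum hM _ _ fun i hi => ?_)) (M_sum hM _ _ fun i hi => ?_)
    · have := Finset.mem_range.1 hi
      exact mM _ (hxm i this) _ (H.vL i this)
    · have := Finset.mem_range.1 hi
      exact mM _ (hMM _ hx _ (hv i this)) _ (H.wL i this)
  have hp2 := hmax _ hp (fun i hi => pj_v hsymm H x hi) (fun i hi => pj_w H x hi)
  rw [eL_mem hself] at hp2 ⊢
  have msum : ∀ (f : ℕ → LaurentSeries k), (∀ i < r, f i ∈ mSet k) →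
      ∑ i ∈ Finset.range r, f i ∈ mSet k := by
    intro f hf
    choose! g hg hg' using hf
    refine ⟨∑ i ∈ Finset.range r, g i, O_sum _ _ fun i hi => hg i (Finset.mem_range.1 hi), ?_⟩
    rw [Finset.mul_sum]
    exact Finset.sum_congr rfl fun i hi => hg' i (Finset.mem_range.1 hi)
  intro y hy
  have e : Q x y = Q (pj Q r v v' x) y + ∑ i ∈ Finset.range r, Q x (v' i) * Q (v i) y
      + ∑ i ∈ Finset.range r, Q x (v i) * Q (v' i) y := by
    simp only [pj, map_sub, LinearMap.sub_apply, map_sum, LinearMap.sum_apply, map_smul,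
      LinearMap.smul_apply, smul_eq_mul]
    ring
  rw [e]
  refine m_add (m_add (hp2 y hy) (msum _ fun i hi => ?_)) (msum _ fun i hi => ?_)
  · exact m_mul' (hxm i hi) (L_Q hself (H.vL i hi) hy)
  · exact m_mul' (hMM _ hx _ (hv i hi)) (L_Q hself (H.wL i hi) hy)

theorem Q_m (hsymm : ∀ x y, Q x y = Q y x) (hself : L = sharp Q L)
    (hM : IsLat M) (h1 : (fun v => eps k • v) '' L ⊆ M) (h2 : M ⊆ L)
    (hMM : ∀ x ∈ M, ∀ y ∈ M, Q x y ∈ mSet k)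
    (H : Hyp Q L r v v') (hv : ∀ i < r, v i ∈ M)
    (hmax : ∀ x ∈ M, (∀ i < r, Q x (v i) = 0) → (∀ i < r, Q x (v' i) = 0) →
        x ∈ (fun v => eps k • v) '' L) {x y : Fin D → LaurentSeries k} (hx : x ∈ M)
    (hy : y ∈ L) (hvy : ∀ i < r, Q (v i) y = 0) : Q x y ∈ mSet k := by
  have hx1 : x - ∑ i ∈ Finset.range r, Q x (v' i) • v i ∈ M :=
    M_sub hM hx (M_sum hM _ _ fun i hi =>
      M_smul hM (L_Q hself (h2 hx) (H.wL i (Finset.mem_range.1 hi))) (hv i (Finset.mem_range.1 hi)))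
  have := eL_of hsymm hself hM h1 h2 hMM H hv hmax hx1 (by
    intro j hj
    rw [map_sub, LinearMap.sub_apply, map_sum, LinearMap.sum_apply, Finset.sum_eq_single j]
    · simpa [H.vw j hj j hj] using m_zero
    · intro i hi hij
      simp [H.vw i (Finset.mem_range.1 hi) j hj, hij]
    · simp [hj])
  rw [eL_mem hself] at this
  have := this y hy
  rw [map_sub, LinearMap.sub_apply, map_sum, LinearMap.sum_apply, Finset.sum_eq_zero] at this
  · simpa using this
  · intro i hi
    simp [hvy i (Finset.mem_range.1 hi)]

theorem count (hsymm : ∀ x y, Q x y = Q y x) (hself : L = sharp Q L)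
    (hM : IsLat M) (h1 : (fun v => eps k • v) '' L ⊆ M) (h2 : M ⊆ L)
    (hMM : ∀ x ∈ M, ∀ y ∈ M, Q x y ∈ mSet k)
    (H : Hyp Q L r v v') (hv : ∀ i < r, v i ∈ M)
    (hmax : ∀ x ∈ M, (∀ i < r, Q x (v i) = 0) → (∀ i < r, Q x (v' i) = 0) →
        x ∈ (fun v => eps k • v) '' L) {a : ℕ} {w : Fin a → (Fin D → LaurentSeries k)}
    (hw : IsQuotBasis ((fun v => eps k • v) '' L) M w) : a = r := by
  obtain ⟨w1, w2, w3⟩ := hw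
  let f : (Fin a → k) → (Fin D → LaurentSeries k) := fun c =>
    ∑ i, (HahnSeries.C (c i) : LaurentSeries k) • w i
  have fM : ∀ c, f c ∈ M := fun c => M_sum hM _ _ fun i _ => M_smul hM (O_C _) (w1 i)
  let T : (Fin a → k) →ₗ[k] (Fin r → k) :=
    { toFun := fun c j => (Q (f c) (v' j)).coeff 0
      map_add' := by
        intro c d
        ext j
        simp [f, add_smul, Finset.sum_add_distrib]
      map_smul' := by
        intro s c
        ext j
        have : f (s • c) = (HahnSeries.C s : LaurentSeries k) • f c := by
          simp only [f, Pi.smul_apply, smul_eq_mul, map_mul, Finset.smul_sum, smul_smul]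
        simp only [this, map_smul, LinearMap.smul_apply, smul_eq_mul, Pi.smul_apply,
          HahnSeries.C_mul_eq_smul, HahnSeries.coeff_smul, RingHom.id_apply] }
  have Tinj : Function.Injective T := by
    rw [← LinearMap.ker_eq_bot, LinearMap.ker_eq_bot']
    intro c hc
    apply w3
    refine eL_of hsymm hself hM h1 h2 hMM H hv hmax (fM c) fun i hi => ?_
    have h0 : (Q (f c) (v' i)).coeff 0 = 0 := congrFun hc ⟨i, hi⟩
    have := exists_res (L_Q hself (h2 (fM c)) (H.wL i hi))
    rw [h0, map_zero, sub_zero] at this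
    exact this
  have Tsurj : Function.Surjective T := by
    rw [← LinearMap.range_eq_top, eq_top_iff, ← (Pi.basisFun k (Fin r)).span_eq, Submodule.span_le]
    rintro _ ⟨j, rfl⟩
    obtain ⟨c, hc⟩ := w2 _ (hv j j.2)
    refine ⟨c, ?_⟩
    ext i
    rw [eL_mem hself] at hc
    have := coeff_m (hc _ (H.wL i i.2))
    rw [map_sub, LinearMap.sub_apply, HahnSeries.coeff_sub, H.vw j j.2 i i.2, sub_eq_zero] at this
    refine this.symm.trans ?_
    simp only [Pi.basisFun_apply, Pi.single_apply, Fin.ext_iff]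
    split_ifs <;> first | (exfalso; omega) | simp
  have := LinearEquiv.finrank_eq (LinearEquiv.ofBijective T ⟨Tinj, Tsurj⟩)
  simpa using this

/-- the assembled basis -/
def bb (n : ℕ) (v v' : ℕ → Fin D → LaurentSeries k) (z : Fin D → LaurentSeries k) (i : Fin D) :
    Fin D → LaurentSeries k :=
  if (i : ℕ) < n then v i else if D - 1 - (i : ℕ) < n then v' (D - 1 - i) else z

theorem bb_gram (hsymm : ∀ x y, Q x y = Q y x) (H : Hyp Q L r v v') (hr : 2 * r ≤ D)
    (hr' : D ≤ 2 * r + 1)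
    {z : Fin D → LaurentSeries k} {u : LaurentSeries k} (hz : 2 * r < D → Q z z = u)
    (zv : 2 * r < D → ∀ i < r, Q z (v i) = 0) (zw : 2 * r < D → ∀ i < r, Q z (v' i) = 0)
    (i j : Fin D) : Q (bb r v v' z i) (bb r v v' z j) =
      if (i : ℕ) + (j : ℕ) = D - 1 then (if (i : ℕ) = j then u else 1) else 0 := by
  have hi := i.2
  have hj := j.2
  unfold bb
  by_cases i1 : (i : ℕ) < r
  · rw [if_pos i1]
    by_cases j1 : (j : ℕ) < r
    · rw [if_pos j1, H.vv _ i1 _ j1, if_neg (by omega)]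
    · rw [if_neg j1]
      by_cases j2 : D - 1 - (j : ℕ) < r
      · rw [if_pos j2, H.vw _ i1 _ j2]
        by_cases h : (i : ℕ) = D - 1 - j
        · rw [if_pos h, if_pos (by omega), if_neg (by omega)]
        · rw [if_neg h, if_neg (by omega)]
      · rw [if_neg j2, hsymm, zv (by omega) _ i1, if_neg (by omega)]
  · rw [if_neg i1]
    by_cases i2 : D - 1 - (i : ℕ) < r
    · rw [if_pos i2]
      by_cases j1 : (j : ℕ) < r
      · rw [if_pos j1, hsymm, H.vw _ j1 _ i2]
        by_cases h : (j : ℕ) = D - 1 - i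
        · rw [if_pos h, if_pos (by omega), if_neg (by omega)]
        · rw [if_neg h, if_neg (by omega)]
      · rw [if_neg j1]
        by_cases j2 : D - 1 - (j : ℕ) < r
        · rw [if_pos j2, H.ww _ i2 _ j2, if_neg (by omega)]
        · rw [if_neg j2, hsymm, zw (by omega) _ i2, if_neg (by omega)]
    · rw [if_neg i2]
      by_cases j1 : (j : ℕ) < r
      · rw [if_pos j1, zv (by omega) _ j1, if_neg (by omega)]
      · rw [if_neg j1]
        by_cases j2 : D - 1 - (j : ℕ) < r
        · rw [if_pos j2, zw (by omega) _ j2, if_neg (by omega)]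
        · rw [if_neg j2, hz (by omega), if_pos (by omega), if_pos (by omega)]

theorem exists_mid (hk : (2 : k) ≠ 0) (hsymm : ∀ x y, Q x y = Q y x)
    (hgram : ∀ i j, Q (Pi.single i 1) (Pi.single j 1) =
      if (i : ℕ) + (j : ℕ) = D - 1 then 1 else 0) (hself : L = sharp Q L) (hL : IsLat L)
    (H : Hyp Q L r v v') (hr : D = 2 * r + 1) :
    ∃ z, Q z z = 1 ∧ (∀ i < r, Q z (v i) = 0) ∧ (∀ i < r, Q z (v' i) = 0) := by
  let f : Fin r ⊕ Fin r → Fin D → LaurentSeries k := Sum.elim (fun i => v i) (fun i => v' i)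
  have hf : Module.finrank (LaurentSeries k) (Submodule.span (LaurentSeries k) (Set.range f)) ≤ 2 * r := by
    have := finrank_range_le_card (R := LaurentSeries k) f
    simp only [Fintype.card_sum, Fintype.card_fin] at this
    unfold Set.finrank at this
    omega
  have ho := LinearMap.BilinForm.finrank_orthogonal (nondeg' hsymm hgram)
    (Submodule.span (LaurentSeries k) (Set.range f))
  simp only [Module.finrank_fin_fun] at ho
  have hne : Q.orthogonal (Submodule.span (LaurentSeries k) (Set.range f)) ≠ ⊥ := by
    intro h
    rw [h, finrank_bot] at ho
    omega
  obtain ⟨z, hz, z0⟩ := Submodule.exists_mem_ne_zero_of_ne_bot hne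
  rw [orth_span] at hz
  have zv : ∀ i < r, Q z (v i) = 0 := fun i hi => by
    rw [hsymm]; exact hz (Sum.inl ⟨i, hi⟩)
  have zw : ∀ i < r, Q z (v' i) = 0 := fun i hi => by
    rw [hsymm]; exact hz (Sum.inr ⟨i, hi⟩)
  have u0 : Q z z ≠ 0 := by
    intro h
    obtain ⟨x, x', H'⟩ := H.stepI hk hsymm hself hL (nondeg hgram) z0 h zv zw
    have := H'.bound hsymm hgram
    omega
  have hG := bb_gram hsymm H (by omega) (by omega) (fun _ => rfl) (fun _ => zv) (fun _ => zw)
  let P : Matrix (Fin D) (Fin D) (LaurentSeries k) := Matrix.of (bb r v v' z)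
  let J : Matrix (Fin D) (Fin D) (LaurentSeries k) :=
    Matrix.of fun i j => if (i : ℕ) + (j : ℕ) = D - 1 then 1 else 0
  have hJ : J * J = 1 := by
    ext i j
    simp only [Matrix.mul_apply, J, Matrix.of_apply, rev_iff, Matrix.one_apply]
    simp [Fin.rev_eq_iff, eq_comm]
  have hJd : J.det ≠ 0 := by
    intro h
    have := congrArg Matrix.det hJ
    simp [h] at this
  have e1 : P * J * P.transpose = J * Matrix.diagonal
      (fun j => if j = (⟨r, by omega⟩ : Fin D) then Q z z else 1) := by
    have h1 := LinearMap.toMatrix₂'_compl₁₂ (R := LaurentSeries k) Q (Matrix.toLin' P.transpose)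
      (Matrix.toLin' P.transpose)
    have h2 : LinearMap.toMatrix₂' (LaurentSeries k) Q = J := by
      ext i j
      simp [LinearMap.toMatrix₂'_apply, hgram, J]
    rw [h2] at h1
    simp only [LinearMap.toMatrix'_toLin', Matrix.transpose_transpose] at h1
    rw [← h1]
    apply Matrix.ext
    intro i j
    rw [LinearMap.toMatrix₂'_apply, Matrix.mul_diagonal]
    have hrow : ∀ i, Matrix.toLin' P.transpose (Pi.single i 1) = bb r v v' z i := by
      intro i
      rw [Matrix.toLin'_apply, Matrix.mulVec_single_one]
      rfl
    rw [LinearMap.compl₁₂_apply, hrow, hrow, hG]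
    simp only [J, Matrix.of_apply, Fin.ext_iff]
    have hi := i.2
    have hj := j.2
    split_ifs <;> first | (exfalso; omega) | simp
  have e2 := congrArg Matrix.det e1
  rw [Matrix.det_mul, Matrix.det_mul, Matrix.det_mul, Matrix.det_transpose, Matrix.det_diagonal,
    Finset.prod_ite_eq' Finset.univ _ (fun _ => Q z z), if_pos (Finset.mem_univ _)] at e2
  have e3 : P.det * P.det = Q z z := by
    apply mul_left_cancel₀ hJd
    rw [← e2]; ring
  have d0 : P.det ≠ 0 := by
    intro h
    rw [h] at e3
    exact u0 (by simpa using e3.symm)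
  refine ⟨P.det⁻¹ • z, ?_, ?_, ?_⟩
  · simp [← e3, d0]
  · intro i hi; simp [zv i hi]
  · intro i hi; simp [zw i hi]
end fin
/-- let `L, M` be `o`-lattices with `εL ⊆ M ⊆ L = L^♯`, `Q(M,M) ⊆ m` and
`dim_k(M/εL) = a`.  Then there is an `o`-basis `v_1, …, v_D` of `L` with
`Q(v_i,v_j) = δ_{i,D+1-j}` such that `v_1, …, v_a, εv_{a+1}, …, εv_D` is an `o`-basis
of `M`. -/
theorem affine_extend_basis {k : Type*} [Field k] [Fintype k]
    (hchar : ringChar k ≠ 2) {D : ℕ} (hD : 0 < D)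
    (Q : LinearMap.BilinForm (LaurentSeries k) (Fin D → LaurentSeries k))
    (hsymm : ∀ x y, Q x y = Q y x)
    (hgram : ∀ i j, Q (Pi.single i 1) (Pi.single j 1) =
      if (i : ℕ) + (j : ℕ) = D - 1 then 1 else 0)
    (L M : Set (Fin D → LaurentSeries k)) (hL : IsLat L) (hM : IsLat M)
    (hself : L = sharp Q L)
    (h1 : (fun v => eps k • v) '' L ⊆ M) (h2 : M ⊆ L)
    (hMM : ∀ x ∈ M, ∀ y ∈ M, Q x y ∈ mSet k)
    (a : ℕ) (ha : ∃ w : Fin a → (Fin D → LaurentSeries k),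
      IsQuotBasis ((fun v => eps k • v) '' L) M w) :
    ∃ b : Fin D → (Fin D → LaurentSeries k),
      (∀ i j, Q (b i) (b j) = if (i : ℕ) + (j : ℕ) = D - 1 then 1 else 0) ∧
      L = {v | ∃ c : Fin D → LaurentSeries k, (∀ i, c i ∈ Oset k) ∧ v = ∑ i, c i • b i} ∧
      M = {v | ∃ c : Fin D → LaurentSeries k, (∀ i, c i ∈ Oset k) ∧
        (∀ i : Fin D, a ≤ (i : ℕ) → c i ∈ mSet k) ∧ v = ∑ i, c i • b i} := by
  have hk : (2 : k) ≠ 0 := Ring.two_ne_zero hchar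
  obtain ⟨r, v, v', H, hv, hmax⟩ := phase1 hk hsymm hgram hself hM h1 h2 hMM
  obtain ⟨w, hw⟩ := ha
  obtain rfl := count hsymm hself hM h1 h2 hMM H hv hmax hw
  have hP : ∀ x ∈ M, ∀ y ∈ L, (∀ i < a, Q (v i) y = 0) → Q x y ∈ mSet k :=
    fun x hx y hy h => Q_m hsymm hself hM h1 h2 hMM H hv hmax hx hy h
  have hbd := H.bound hsymm hgram
  -- phase 2: extend to a maximal hyperbolic family
  have ph2 : ∀ s, a ≤ s → 2 * s ≤ D → ∃ v v', Hyp Q L s v v' ∧ (∀ i < a, v i ∈ M) ∧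
      ∀ x ∈ M, ∀ y ∈ L, (∀ i < a, Q (v i) y = 0) → Q x y ∈ mSet k := by
    intro s hs
    induction s, hs using Nat.le_induction with
    | base => exact fun _ => ⟨v, v', H, hv, hP⟩
    | succ s hs ih =>
      intro hsD
      obtain ⟨v, v', H, hv, hP⟩ := ih (by omega)
      obtain ⟨x, x0, xx, xv, xw⟩ := H.exists_iso hsymm hgram hsD
      obtain ⟨z, x', H'⟩ := H.stepI hk hsymm hself hL (nondeg hgram) x0 xx xv xw
      have e : ∀ i < a, Function.update v s z i = v i := fun i hi => by
        rw [Function.update_of_ne (by omega)]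
      refine ⟨_, _, H', fun i hi => by rw [e i hi]; exact hv i hi, fun x hx y hy h => ?_⟩
      exact hP x hx y hy fun i hi => by rw [← e i hi]; exact h i hi
  obtain ⟨n, hn, hn'⟩ : ∃ n, 2 * n ≤ D ∧ D ≤ 2 * n + 1 := ⟨D / 2, by omega, by omega⟩
  clear hP hv hmax H v v'
  obtain ⟨v, v', H, hv, hP⟩ := ph2 n (by omega) hn
  obtain ⟨z, hz, zv, zw⟩ : ∃ z, (2 * n < D → Q z z = 1) ∧
      (2 * n < D → ∀ i < n, Q z (v i) = 0) ∧ (2 * n < D → ∀ i < n, Q z (v' i) = 0) := by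
    by_cases h : 2 * n < D
    · obtain ⟨z, hz, zv, zw⟩ := exists_mid hk hsymm hgram hself hL H (by omega)
      exact ⟨z, fun _ => hz, fun _ => zv, fun _ => zw⟩
    · exact ⟨0, fun h' => absurd h' h, fun h' => absurd h' h, fun h' => absurd h' h⟩
  have hG : ∀ i j, Q (bb n v v' z i) (bb n v v' z j) =
      if (i : ℕ) + (j : ℕ) = D - 1 then 1 else 0 := by
    intro i j
    rw [bb_gram hsymm H hn hn' hz zv zw i j]
    simp
  set b : Fin D → (Fin D → LaurentSeries k) := bb n v v' z with hb
  have hbn : ∀ i : Fin D, (i : ℕ) ≠ (Fin.rev i : ℕ) → b i ∈ L := by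
    intro i hi
    have := i.2
    rw [Fin.val_rev] at hi
    simp only [hb, bb]
    by_cases i1 : (i : ℕ) < n
    · rw [if_pos i1]; exact H.vL _ i1
    · rw [if_neg i1, if_pos (by omega)]
      exact H.wL _ (by omega)
  have hbL : ∀ i, b i ∈ L := by
    intro m
    by_cases hm : (m : ℕ) = (Fin.rev m : ℕ)
    · have hm' : Fin.rev m = m := (Fin.ext hm).symm
      rw [L_mem hself]
      intro x hx
      have ex := expand hG x
      have e : Q x x = ∑ i, Q x (b (Fin.rev i)) * Q x (b i) := by
        have h := congrArg (fun y => Q x y) ex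
        simp only [map_sum, map_smul, smul_eq_mul] at h
        exact h
      rw [← Finset.add_sum_erase _ _ (Finset.mem_univ m), hm'] at e
      rw [hsymm]
      apply sq_O
      rw [eq_sub_of_add_eq e.symm]
      refine O_sub (L_Q hself hx hx) (O_sum _ _ fun i hi => ?_)
      have him : i ≠ m := Finset.ne_of_mem_erase hi
      have h1 : (i : ℕ) ≠ (Fin.rev i : ℕ) := by
        intro h
        apply him
        rw [Fin.val_rev] at h hm
        have := i.2
        have := m.2
        ext
        omega
      refine O_mul (L_Q hself hx (hbn _ ?_)) (L_Q hself hx (hbn _ h1))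
      rw [Fin.rev_rev]
      exact h1.symm
    · exact hbn m hm
  refine ⟨b, hG, ?_, ?_⟩
  · ext x
    constructor
    · intro hx
      exact ⟨fun i => Q x (b (Fin.rev i)), fun i => L_Q hself hx (hbL _), expand hG x⟩
    · rintro ⟨c, hc, rfl⟩
      exact L_sum hself _ _ fun i _ => L_smul hself (hc i) (hbL i)
  · have hbv : ∀ i : Fin D, (i : ℕ) < a → b i = v i := by
      intro i hi
      simp only [hb, bb]
      rw [if_pos (by omega)]
    ext x
    constructor
    · intro hx
      refine ⟨fun i => Q x (b (Fin.rev i)), fun i => L_Q hself (h2 hx) (hbL _), ?_, expand hG x⟩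
      intro i hi
      refine hP x hx _ (hbL _) fun j hj => ?_
      have hjD : j < D := by omega
      have := hG ⟨j, hjD⟩ (Fin.rev i)
      rw [hbv ⟨j, hjD⟩ hj, if_neg] at this
      · exact this
      · rw [Fin.val_rev]
        have := i.2
        simp only
        omega
    · rintro ⟨c, hc, hc', rfl⟩
      refine M_sum hM _ _ fun i _ => ?_
      by_cases hi : (i : ℕ) < a
      · rw [hbv i hi]
        exact M_smul hM (hc i) (hv i hi)
      · obtain ⟨s, hs, e⟩ := hc' i (by omega)
        rw [e, mul_smul]
        exact h1 ⟨_, L_smul hself hs (hbL i), rfl⟩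
end
end

section
/- Let Z = {(M, L) | M^∗ = M, L^♯ = L, εL ⊆ M ⊆ L} be the set of pairs of lattices in V. Suppose (M₀, L₀), (M, L) ∈ Z satisfy dim(M/(M ∩ M₀)) + dim(L/(L ∩ L₀)) = 1. Then for every (M′, L′) ∈ Z, the quantity dim(M′/(M′∩M₀)) + dim(M′/(M′∩M)) + dim(L′/(L′∩L₀)) + dim(L′/(L′∩L)) is odd. -/
noncomputable section

open scoped Classical

/-- Membership in `Z = {(M, L) | M^∗ = M, L^♯ = L, εL ⊆ M ⊆ L}`. -/
def InZ {k : Type*} [Field k] {D : ℕ}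
    (Q : LinearMap.BilinForm (LaurentSeries k) (Fin D → LaurentSeries k))
    (M L : Set (Fin D → LaurentSeries k)) : Prop :=
  IsLat M ∧ IsLat L ∧ mstar Q M = M ∧ sharp Q L = L ∧
    (fun v => eps k • v) '' L ⊆ M ∧ M ⊆ L

section Helpers

open Module

lemma alt_nondeg_even {k T : Type*} [Field k] (h2 : (2:k) ≠ 0) [AddCommGroup T] [Module k T]
    [FiniteDimensional k T] (w : LinearMap.BilinForm k T) (halt : ∀ x, w x x = 0)
    (hnd : w.Nondegenerate) : Even (finrank k T) := by
  have b := finBasis k T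
  have hd := (LinearMap.BilinForm.nondegenerate_iff_det_ne_zero b).1 hnd
  have hneg : ∀ x y, w x y = - w y x := by
    intro x y
    have := halt (x + y)
    simp only [map_add, LinearMap.add_apply, halt] at this
    linear_combination this
  have hs : (LinearMap.BilinForm.toMatrix b w).transpose = - LinearMap.BilinForm.toMatrix b w := by
    ext i j
    simp only [Matrix.transpose_apply, Matrix.neg_apply, LinearMap.BilinForm.toMatrix_apply]
    exact hneg _ _
  have h1 := congrArg Matrix.det hs
  rw [Matrix.det_transpose, Matrix.det_neg, Fintype.card_fin] at h1
  by_contra ho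
  rw [Nat.not_even_iff_odd] at ho
  rw [ho.neg_one_pow] at h1
  apply hd
  have : (2:k) * (LinearMap.BilinForm.toMatrix b w).det = 0 := by linear_combination h1
  simpa [h2] using this

lemma alt_even {k T : Type*} [Field k] (h2 : (2:k) ≠ 0) [AddCommGroup T] [Module k T]
    [FiniteDimensional k T] (w : LinearMap.BilinForm k T) (halt : ∀ x, w x x = 0) :
    Even (finrank k T + finrank k (LinearMap.ker w)) := by
  have hneg : ∀ x y, w x y = - w y x := by
    intro x y
    have := halt (x + y)
    simp only [map_add, LinearMap.add_apply, halt] at this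
    linear_combination this
  obtain ⟨U, hU⟩ := Submodule.exists_isCompl (LinearMap.ker w)
  have hf := Submodule.finrank_add_eq_of_isCompl hU
  have hker : ∀ x : U, (∀ y : U, w x y = 0) → x = 0 := by
    intro x hx
    have : (x : T) ∈ LinearMap.ker w := by
      rw [LinearMap.mem_ker]
      ext y
      have hy : y ∈ LinearMap.ker w ⊔ U := by rw [hU.sup_eq_top]; trivial
      obtain ⟨a, ha, u, hu, rfl⟩ := Submodule.mem_sup.1 hy
      rw [LinearMap.mem_ker] at ha
      have := hx ⟨u, hu⟩
      simp only at this
      rw [map_add, this, hneg, ha]; simp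
    have h0 : (x : T) ∈ LinearMap.ker w ⊓ U := ⟨this, x.2⟩
    rw [hU.inf_eq_bot] at h0
    exact Subtype.ext (by simpa using h0)
  have he : Even (finrank k U) := by
    apply alt_nondeg_even h2 (w.restrict U) (fun x => halt x)
    constructor
    · intro x hx
      exact hker x hx
    · intro x hx
      exact hker x fun y => by rw [hneg]; have := hx y; simpa using this
  rw [← hf]
  obtain ⟨r, hr⟩ := he
  exact ⟨finrank k (LinearMap.ker w) + r, by omega⟩

lemma fin_parity {k W : Type*} [Field k] (h2 : (2:k) ≠ 0) [AddCommGroup W] [Module k W]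
    [FiniteDimensional k W] (Q : LinearMap.BilinForm k W) (hs : ∀ x y, Q x y = Q y x)
    (A B C : Submodule k W) (hA : ∀ x, x ∈ A ↔ ∀ y ∈ A, Q x y = 0)
    (hB : ∀ x, x ∈ B ↔ ∀ y ∈ B, Q x y = 0) (hC : ∀ x, x ∈ C ↔ ∀ y ∈ C, Q x y = 0)
    (htop : A ⊔ B ⊔ C = ⊤) (hbot : A ⊓ B ⊓ C = ⊥) :
    finrank k A = finrank k B ∧ finrank k A = finrank k C ∧
    Even (finrank k A + (finrank k ↥(A ⊓ B) + (finrank k ↥(A ⊓ C) + finrank k ↥(B ⊓ C)))) := by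
  have hrefl : Q.IsRefl := fun x y h => by rw [hs]; exact h
  have hk : ∀ x, (∀ y, Q x y = 0) → x = 0 := by
    intro x hx
    have : x ∈ A ⊓ B ⊓ C := ⟨⟨(hA x).2 fun y _ => hx y, (hB x).2 fun y _ => hx y⟩,
      (hC x).2 fun y _ => hx y⟩
    rw [hbot] at this
    simpa using this
  have hnd : Q.Nondegenerate := ⟨hk, fun x hx => hk x fun y => by rw [hs]; exact hx y⟩
  have oA : Q.orthogonal A = A := by
    ext x; rw [LinearMap.BilinForm.mem_orthogonal_iff, hA x]
    exact forall₂_congr fun y _ => by rw [hs]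
  have oB : Q.orthogonal B = B := by
    ext x; rw [LinearMap.BilinForm.mem_orthogonal_iff, hB x]
    exact forall₂_congr fun y _ => by rw [hs]
  have oC : Q.orthogonal C = C := by
    ext x; rw [LinearMap.BilinForm.mem_orthogonal_iff, hC x]
    exact forall₂_congr fun y _ => by rw [hs]
  have osup : ∀ M N : Submodule k W, Q.orthogonal (M ⊔ N) = Q.orthogonal M ⊓ Q.orthogonal N := by
    intro M N
    apply le_antisymm
    · exact le_inf (LinearMap.BilinForm.orthogonal_le le_sup_left)
        (LinearMap.BilinForm.orthogonal_le le_sup_right)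
    · rintro x ⟨h1, h2⟩ y hy
      obtain ⟨m, hm, n, hn, rfl⟩ := Submodule.mem_sup.1 hy
      have e1 := h1 m hm
      have e2 := h2 n hn
      simp only [map_add, LinearMap.add_apply] at *
      simp [e1, e2]
  have fA := LinearMap.BilinForm.finrank_orthogonal hnd A
  have fB := LinearMap.BilinForm.finrank_orthogonal hnd B
  have fC := LinearMap.BilinForm.finrank_orthogonal hnd C
  have lA := Submodule.finrank_le A
  have lB := Submodule.finrank_le B
  have lC := Submodule.finrank_le C
  rw [oA] at fA
  rw [oB] at fB
  rw [oC] at fC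
  refine ⟨by omega, by omega, ?_⟩
  have key : Q.orthogonal (A ⊓ (B ⊔ C)) = A ⊔ (B ⊓ C) := by
    have : A ⊓ (B ⊔ C) = Q.orthogonal (A ⊔ (B ⊓ C)) := by
      have h3 : B ⊓ C = Q.orthogonal (B ⊔ C) := by rw [osup, oB, oC]
      rw [osup, oA, h3, LinearMap.BilinForm.orthogonal_orthogonal hnd hrefl]
    rw [this, LinearMap.BilinForm.orthogonal_orthogonal hnd hrefl]
  let s : (B × C) →ₗ[k] W := B.subtype.coprod C.subtype
  let f : (B × C) →ₗ[k] W ⧸ A := A.mkQ.comp s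
  have hfs : Function.Surjective f := by
    intro q
    obtain ⟨x, rfl⟩ := A.mkQ_surjective q
    have hx : x ∈ A ⊔ B ⊔ C := by rw [htop]; trivial
    obtain ⟨y, hy, c, hc, rfl⟩ := Submodule.mem_sup.1 hx
    obtain ⟨a, ha, b, hb, rfl⟩ := Submodule.mem_sup.1 hy
    refine ⟨(⟨b, hb⟩, ⟨c, hc⟩), ?_⟩
    have : A.mkQ a = 0 := by simpa using ha
    simp only [f, s, LinearMap.comp_apply, LinearMap.coprod_apply, Submodule.subtype_apply, map_add, this, zero_add]
  have hfT := LinearMap.finrank_range_add_finrank_ker f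
  rw [LinearMap.range_eq_top.2 hfs, finrank_top, finrank_prod] at hfT
  have hq := Submodule.finrank_quotient_add_finrank A
  have memT : ∀ x : B × C, x ∈ LinearMap.ker f ↔ (x.1 : W) + x.2 ∈ A := by
    intro x
    simp [f, s, -map_add, -Submodule.Quotient.mk_add]
  let w : LinearMap.BilinForm k (LinearMap.ker f) :=
    Q.compl₁₂ (B.subtype ∘ₗ LinearMap.fst k B C ∘ₗ (LinearMap.ker f).subtype)
      (C.subtype ∘ₗ LinearMap.snd k B C ∘ₗ (LinearMap.ker f).subtype)
  have hw : ∀ x y, w x y = Q (x.1.1 : W) (y.1.2 : W) := fun x y => rfl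
  have ev := alt_even h2 w (by
    intro x
    rw [hw]
    have h1 := (hA _).1 ((memT _).1 x.2) _ ((memT _).1 x.2)
    have h3 := (hB _).1 x.1.1.2 _ x.1.1.2
    have h4 := (hC _).1 x.1.2.2 _ x.1.2.2
    simp only [map_add, LinearMap.add_apply, h3, h4, hs (x.1.2 : W) (x.1.1 : W)] at h1
    have : (2:k) * Q (x.1.1 : W) (x.1.2 : W) = 0 := by linear_combination h1
    simpa [h2] using this)
  let g : (↥(A ⊓ B) × (↥(A ⊓ C) × ↥(B ⊓ C))) →ₗ[k] W × W :=
    ((A ⊓ B).subtype.coprod ((0 : _ →ₗ[k] W).coprod (B ⊓ C).subtype)).prod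
      ((0 : _ →ₗ[k] W).coprod ((A ⊓ C).subtype.coprod (-(B ⊓ C).subtype)))
  have hg : ∀ x, g x = ((x.1 : W) + x.2.2, (x.2.1 : W) - x.2.2) := by
    intro x
    simp [g, sub_eq_add_neg]
  let i : (LinearMap.ker f) →ₗ[k] W × W :=
    (B.subtype.prodMap C.subtype) ∘ₗ (LinearMap.ker f).subtype
  have hi : ∀ x, i x = ((x.1.1 : W), (x.1.2 : W)) := fun x => rfl
  have hii : Function.Injective i := by
    intro x y h
    rw [hi, hi, Prod.mk.injEq] at h
    exact Subtype.ext (Prod.ext (Subtype.ext h.1) (Subtype.ext h.2))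
  have hgi : Function.Injective g := by
    rw [injective_iff_map_eq_zero]
    rintro ⟨x, y, e⟩ h
    rw [hg] at h
    simp only [Prod.mk_eq_zero] at h
    have he : (e : W) ∈ A ⊓ B ⊓ C := by
      refine ⟨⟨?_, e.2.1⟩, e.2.2⟩
      rw [← sub_eq_zero.1 h.2]; exact y.2.1
    rw [hbot, Submodule.mem_bot] at he
    rw [he, add_zero, sub_zero] at h
    refine Prod.ext (Subtype.ext h.1) (Prod.ext (Subtype.ext h.2) (Subtype.ext he))
  have hr : LinearMap.range g = (LinearMap.ker w).map i := by
    ext ⟨u, v⟩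
    constructor
    · rintro ⟨⟨x, y, e⟩, h⟩
      rw [hg, Prod.mk.injEq] at h
      obtain ⟨rfl, rfl⟩ := h
      have hb : (x : W) + e ∈ B := add_mem x.2.2 e.2.1
      have hc : (y : W) - e ∈ C := sub_mem y.2.2 e.2.2
      refine ⟨⟨(⟨_, hb⟩, ⟨_, hc⟩), ?_⟩, ?_, rfl⟩
      · rw [memT]
        have : (x : W) + y ∈ A := add_mem x.2.1 y.2.1
        convert this using 1
        simp
      · rw [SetLike.mem_coe, LinearMap.mem_ker]
        ext t
        rw [hw]
        simp only [map_add, LinearMap.add_apply, LinearMap.zero_apply]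
        have h1 := (hA _).1 x.2.1 _ ((memT _).1 t.2)
        have h3 := (hB _).1 x.2.2 _ t.1.1.2
        have h4 := (hC _).1 e.2.2 _ t.1.2.2
        rw [map_add, h3, zero_add] at h1
        rw [h1, h4, add_zero]
    · rintro ⟨t, ht, h⟩
      rw [hi, Prod.mk.injEq] at h
      obtain ⟨rfl, rfl⟩ := h
      rw [SetLike.mem_coe, LinearMap.mem_ker] at ht
      have hb : (t.1.1 : W) ∈ Q.orthogonal (A ⊓ (B ⊔ C)) := by
        rintro z ⟨hz, hz'⟩
        obtain ⟨b, hb, c, hc, rfl⟩ := Submodule.mem_sup.1 hz'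
        have h1 := LinearMap.congr_fun ht ⟨(⟨b, hb⟩, ⟨c, hc⟩), (memT _).2 hz⟩
        rw [hw] at h1
        have h3 := (hB _).1 t.1.1.2 _ hb
        change Q _ _ = 0
        rw [hs, map_add, h3, zero_add]
        exact h1
      rw [key] at hb
      obtain ⟨a, ha, e, he, hae⟩ := Submodule.mem_sup.1 hb
      have haB : a ∈ B := by
        have : (t.1.1 : W) - e ∈ B := sub_mem t.1.1.2 he.1
        rwa [← hae, add_sub_cancel_right] at this
      have hm := (memT _).1 t.2
      have hy : (t.1.2 : W) + e ∈ A ⊓ C := by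
        refine ⟨?_, add_mem t.1.2.2 he.2⟩
        have := sub_mem hm ha
        rw [← hae] at this
        have e3 : a + e + (t.1.2 : W) - a = (t.1.2 : W) + e := by abel
        rwa [e3] at this
      refine ⟨(⟨a, ha, haB⟩, ⟨_, hy⟩, ⟨e, he⟩), ?_⟩
      rw [hg]
      simp [hae]
  have hcard := LinearMap.finrank_range_of_inj hgi
  rw [hr, ← (Submodule.equivMapOfInjective i hii (LinearMap.ker w)).finrank_eq, finrank_prod, finrank_prod] at hcard
  rw [← hcard]
  have : finrank k (LinearMap.ker f) = finrank k A := by omega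
  rwa [this] at ev

def QB {k V : Type*} [Field k] [AddCommGroup V] [Module k V] {a : ℕ} (N M : Submodule k V)
    (w : Fin a → V) : Prop :=
  (∀ i, w i ∈ M) ∧ (∀ x ∈ M, ∃ c : Fin a → k, x - ∑ i, c i • w i ∈ N) ∧
    (∀ c : Fin a → k, (∑ i, c i • w i) ∈ N → c = 0)

lemma QB.finrank_eq {k V : Type*} [Field k] [AddCommGroup V] [Module k V] [FiniteDimensional k V]
    {a : ℕ} {N M : Submodule k V} {w : Fin a → V} (h : QB N M w) (hNM : N ≤ M) :
    finrank k M = finrank k N + a := by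
  let f : (Fin a → k) →ₗ[k] V := Fintype.linearCombination k w
  have hf : ∀ c, f c = ∑ i, c i • w i := fun c => Fintype.linearCombination_apply k w c
  have hinj : Function.Injective f := by
    rw [injective_iff_map_eq_zero]
    intro c hc
    apply h.2.2
    rw [← hf, hc]; exact zero_mem _
  have hr := LinearMap.finrank_range_of_inj hinj
  rw [finrank_fin_fun] at hr
  have hinf : N ⊓ LinearMap.range f = ⊥ := by
    rw [eq_bot_iff]
    rintro _ ⟨h1, c, rfl⟩
    rw [SetLike.mem_coe, hf] at h1
    rw [h.2.2 c h1]; simp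
  have hsup : N ⊔ LinearMap.range f = M := by
    apply le_antisymm
    · refine sup_le hNM ?_
      rintro _ ⟨c, rfl⟩
      rw [hf]
      exact sum_mem fun i _ => M.smul_mem _ (h.1 i)
    · intro x hx
      obtain ⟨c, hc⟩ := h.2.1 x hx
      rw [← hf] at hc
      exact Submodule.mem_sup.2 ⟨_, hc, f c, ⟨c, rfl⟩, by simp⟩
  have := Submodule.finrank_sup_add_finrank_inf_eq N (LinearMap.range f)
  rw [hinf, hsup, finrank_bot, hr] at this
  simpa using this

lemma QB.finite {k V : Type*} [Field k] [AddCommGroup V] [Module k V]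
    {a : ℕ} {N M : Submodule k V} {w : Fin a → V} (h : QB N M w) :
    FiniteDimensional k (M ⧸ N.submoduleOf M) := by
  let f : (Fin a → k) →ₗ[k] M := Fintype.linearCombination k (fun i => (⟨w i, h.1 i⟩ : M))
  have hf : ∀ c, f c = ∑ i, c i • (⟨w i, h.1 i⟩ : M) :=
    fun c => Fintype.linearCombination_apply k _ c
  refine Module.Finite.of_surjective ((N.submoduleOf M).mkQ ∘ₗ f) ?_
  intro q
  obtain ⟨x, rfl⟩ := Submodule.mkQ_surjective _ q
  obtain ⟨c, hc⟩ := h.2.1 x x.2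
  refine ⟨c, ?_⟩
  symm
  rw [LinearMap.comp_apply, ← sub_eq_zero, ← map_sub, ← LinearMap.mem_ker, Submodule.ker_mkQ]
  change (x : V) - (f c : M) ∈ N
  rw [hf]
  simpa using hc

lemma parity_nd {k W : Type*} [Field k] (h2 : (2:k) ≠ 0) [AddCommGroup W] [Module k W]
    (Q : LinearMap.BilinForm k W) (hs : ∀ x y, Q x y = Q y x)
    (A B C : Submodule k W) (hA : ∀ x, x ∈ A ↔ ∀ y ∈ A, Q x y = 0)
    (hB : ∀ x, x ∈ B ↔ ∀ y ∈ B, Q x y = 0) (hC : ∀ x, x ∈ C ↔ ∀ y ∈ C, Q x y = 0)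
    (htop : A ⊔ B ⊔ C = ⊤) (hbot : A ⊓ B ⊓ C = ⊥) {a₁ a₂ a₃ : ℕ}
    {w₁ : Fin a₁ → W} {w₂ : Fin a₂ → W} {w₃ : Fin a₃ → W}
    (q₁ : QB (A ⊓ B) A w₁) (q₂ : QB (A ⊓ C) A w₂) (q₃ : QB (C ⊓ B) C w₃) :
    Even (a₁ + a₂ + a₃) := by
  have i1 := q₁.finite
  have i2 := q₂.finite
  have iA : FiniteDimensional k A := by
    refine Module.Finite.of_injective
      (((A ⊓ B).submoduleOf A).mkQ.prod ((A ⊓ C).submoduleOf A).mkQ) ?_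
    rw [← LinearMap.ker_eq_bot, LinearMap.ker_prod, Submodule.ker_mkQ, Submodule.ker_mkQ, eq_bot_iff]
    rintro x ⟨h1, h3⟩
    have : (x : W) ∈ A ⊓ B ⊓ C := ⟨h1, h3.2⟩
    rw [hbot] at this
    simpa using this
  have iW : FiniteDimensional k W := by
    let r : W →ₗ[k] (A →ₗ[k] k) := Q.compl₂ A.subtype
    have hr : ∀ x y, r x y = Q x y := fun x y => rfl
    have hk : LinearMap.ker r = A := by
      ext x
      rw [LinearMap.mem_ker, hA]
      constructor
      · intro h y hy
        have := LinearMap.congr_fun h ⟨y, hy⟩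
        simpa [hr] using this
      · intro h
        ext y
        exact h y y.2
    have e : FiniteDimensional k (W ⧸ LinearMap.ker r) :=
      Module.Finite.equiv r.quotKerEquivRange.symm
    rw [hk] at e
    exact Module.Finite.of_submodule_quotient A
  obtain ⟨e1, e2, e3⟩ := fin_parity h2 Q hs A B C hA hB hC htop hbot
  have f1 := q₁.finrank_eq inf_le_left
  have f2 := q₂.finrank_eq inf_le_left
  have f3 := q₃.finrank_eq inf_le_left
  rw [inf_comm C B] at f3
  rw [Nat.even_iff] at *
  omega

lemma QB.mapQ {k V : Type*} [Field k] [AddCommGroup V] [Module k V]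
    {a : ℕ} {A B X : Submodule k V} {w : Fin a → V} (h : QB (A ⊓ B) A w) (hXA : X ≤ A)
    (hXB : X ≤ B) :
    QB (A.map X.mkQ ⊓ B.map X.mkQ) (A.map X.mkQ) (fun i => X.mkQ (w i)) := by
  have hm : ∀ D : Submodule k V, X ≤ D → ∀ v, X.mkQ v ∈ D.map X.mkQ ↔ v ∈ D := by
    intro D hD v
    rw [← Submodule.mem_comap, Submodule.comap_map_mkQ, sup_eq_right.2 hD]
  have hm2 : ∀ v, X.mkQ v ∈ A.map X.mkQ ⊓ B.map X.mkQ ↔ v ∈ A ⊓ B := by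
    intro v
    rw [Submodule.mem_inf, hm A hXA, hm B hXB, Submodule.mem_inf]
  refine ⟨fun i => (hm A hXA _).2 (h.1 i), ?_, ?_⟩
  · rintro _ ⟨x, hx, rfl⟩
    obtain ⟨c, hc⟩ := h.2.1 x hx
    refine ⟨c, ?_⟩
    have := (hm2 _).2 hc
    simpa only [map_sub, map_sum, map_smul] using this
  · intro c hc
    apply h.2.2
    rw [← hm2]
    simpa only [map_sum, map_smul] using hc

lemma parity_top {k V : Type*} [Field k] (h2 : (2:k) ≠ 0) [AddCommGroup V] [Module k V]
    (Q : LinearMap.BilinForm k V) (hs : ∀ x y, Q x y = Q y x)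
    (A B C : Submodule k V) (hA : ∀ x, x ∈ A ↔ ∀ y ∈ A, Q x y = 0)
    (hB : ∀ x, x ∈ B ↔ ∀ y ∈ B, Q x y = 0) (hC : ∀ x, x ∈ C ↔ ∀ y ∈ C, Q x y = 0)
    (htop : A ⊔ B ⊔ C = ⊤) {a₁ a₂ a₃ : ℕ}
    {w₁ : Fin a₁ → V} {w₂ : Fin a₂ → V} {w₃ : Fin a₃ → V}
    (q₁ : QB (A ⊓ B) A w₁) (q₂ : QB (A ⊓ C) A w₂) (q₃ : QB (C ⊓ B) C w₃) :
    Even (a₁ + a₂ + a₃) := by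
  let X := A ⊓ B ⊓ C
  have hXA : X ≤ A := inf_le_left.trans inf_le_left
  have hXB : X ≤ B := inf_le_left.trans inf_le_right
  have hXC : X ≤ C := inf_le_right
  have hX : ∀ x ∈ X, ∀ v, Q x v = 0 := by
    intro x hx v
    have hv : v ∈ A ⊔ B ⊔ C := by rw [htop]; trivial
    obtain ⟨y, hy, c, hc, rfl⟩ := Submodule.mem_sup.1 hv
    obtain ⟨a, ha, b, hb, rfl⟩ := Submodule.mem_sup.1 hy
    rw [map_add, map_add, (hA _).1 (hXA hx) _ ha, (hB _).1 (hXB hx) _ hb, (hC _).1 (hXC hx) _ hc]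
    simp
  let Q' : LinearMap.BilinForm k (V ⧸ X) := LinearMap.liftQ₂ X X Q
    (fun x hx => by rw [LinearMap.mem_ker]; ext v; exact hX x hx v)
    (fun x hx => by rw [LinearMap.mem_ker]; ext v; rw [LinearMap.flip_apply, hs]; exact hX x hx v)
  have hQ' : ∀ x y, Q' (X.mkQ x) (X.mkQ y) = Q x y := fun x y => rfl
  have hm : ∀ D : Submodule k V, X ≤ D → ∀ v, X.mkQ v ∈ D.map X.mkQ ↔ v ∈ D := by
    intro D hD v
    rw [← Submodule.mem_comap, Submodule.comap_map_mkQ, sup_eq_right.2 hD]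
  have hl : ∀ D : Submodule k V, X ≤ D → (∀ x, x ∈ D ↔ ∀ y ∈ D, Q x y = 0) →
      ∀ x, x ∈ D.map X.mkQ ↔ ∀ y ∈ D.map X.mkQ, Q' x y = 0 := by
    intro D hD h x
    obtain ⟨x, rfl⟩ := X.mkQ_surjective x
    rw [hm D hD, h]
    constructor
    · rintro h1 _ ⟨y, hy, rfl⟩
      exact h1 y hy
    · intro h1 y hy
      exact h1 _ ⟨y, hy, rfl⟩
  refine parity_nd h2 Q' ?_ (A.map X.mkQ) (B.map X.mkQ) (C.map X.mkQ) (hl A hXA hA) (hl B hXB hB)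
    (hl C hXC hC) ?_ ?_ (q₁.mapQ hXA hXB) (q₂.mapQ hXA hXC) (q₃.mapQ hXC hXB)
  · intro x y
    obtain ⟨x, rfl⟩ := X.mkQ_surjective x
    obtain ⟨y, rfl⟩ := X.mkQ_surjective y
    exact hs x y
  · rw [← Submodule.map_sup, ← Submodule.map_sup, htop, Submodule.map_top, Submodule.range_mkQ]
  · rw [eq_bot_iff]
    intro x
    obtain ⟨x, rfl⟩ := X.mkQ_surjective x
    rintro ⟨⟨h1, h3⟩, h4⟩
    rw [SetLike.mem_coe, hm _ (by assumption)] at h1 h3 h4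
    have : x ∈ X := ⟨⟨h1, h3⟩, h4⟩
    rw [Submodule.mem_bot, ← LinearMap.mem_ker, Submodule.ker_mkQ]
    exact this

lemma QB.sub {k V : Type*} [Field k] [AddCommGroup V] [Module k V]
    {a : ℕ} {A B S : Submodule k V} {w : Fin a → V} (h : QB (A ⊓ B) A w) (hAS : A ≤ S) :
    QB (A.comap S.subtype ⊓ B.comap S.subtype) (A.comap S.subtype)
      (fun i => (⟨w i, hAS (h.1 i)⟩ : S)) := by
  refine ⟨h.1, ?_, ?_⟩
  · intro x hx
    obtain ⟨c, hc⟩ := h.2.1 x hx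
    refine ⟨c, ?_⟩
    rw [← Submodule.comap_inf, Submodule.mem_comap]
    simpa using hc
  · intro c hc
    apply h.2.2
    rw [← Submodule.comap_inf, Submodule.mem_comap] at hc
    simpa using hc

lemma parity_gen {k V : Type*} [Field k] (h2 : (2:k) ≠ 0) [AddCommGroup V] [Module k V]
    (Q : LinearMap.BilinForm k V) (hs : ∀ x y, Q x y = Q y x)
    (A B C : Submodule k V) (hA : ∀ x, x ∈ A ↔ ∀ y ∈ A, Q x y = 0)
    (hB : ∀ x, x ∈ B ↔ ∀ y ∈ B, Q x y = 0) (hC : ∀ x, x ∈ C ↔ ∀ y ∈ C, Q x y = 0)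
    {a₁ a₂ a₃ : ℕ}
    {w₁ : Fin a₁ → V} {w₂ : Fin a₂ → V} {w₃ : Fin a₃ → V}
    (q₁ : QB (A ⊓ B) A w₁) (q₂ : QB (A ⊓ C) A w₂) (q₃ : QB (C ⊓ B) C w₃) :
    Even (a₁ + a₂ + a₃) := by
  let S := A ⊔ B ⊔ C
  have hAS : A ≤ S := le_sup_left.trans le_sup_left
  have hBS : B ≤ S := le_sup_right.trans le_sup_left
  have hCS : C ≤ S := le_sup_right
  have hl : ∀ D : Submodule k V, D ≤ S → (∀ x, x ∈ D ↔ ∀ y ∈ D, Q x y = 0) →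
      ∀ x, x ∈ D.comap S.subtype ↔ ∀ y ∈ D.comap S.subtype, Q.restrict S x y = 0 := by
    intro D hD h x
    rw [Submodule.mem_comap, h]
    exact ⟨fun h1 y hy => h1 y hy, fun h1 y hy => h1 ⟨y, hD hy⟩ hy⟩
  refine parity_top h2 (Q.restrict S) (fun x y => hs x y) _ _ _ (hl A hAS hA) (hl B hBS hB)
    (hl C hCS hC) ?_ (q₁.sub hAS) (q₂.sub hAS) (q₃.sub hCS)
  rw [eq_top_iff]
  rintro ⟨x, hx⟩ -
  obtain ⟨y, hy, c, hc, rfl⟩ := Submodule.mem_sup.1 hx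
  obtain ⟨a, ha, b, hb, rfl⟩ := Submodule.mem_sup.1 hy
  have e : (⟨a + b + c, hx⟩ : S) = ⟨a, hAS ha⟩ + ⟨b, hBS hb⟩ + ⟨c, hCS hc⟩ := rfl
  rw [e]
  refine add_mem (add_mem ?_ ?_) ?_
  · exact Submodule.mem_sup_left (Submodule.mem_sup_left ha)
  · exact Submodule.mem_sup_left (Submodule.mem_sup_right hb)
  · exact Submodule.mem_sup_right hc

lemma mem_Oset_iff {k : Type*} [Field k] (y : LaurentSeries k) :
    y ∈ Oset k ↔ ∀ n < (0:ℤ), y.coeff n = 0 := by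
  constructor
  · rintro ⟨p, rfl⟩ n hn
    rw [HahnSeries.ofPowerSeries_apply]
    apply HahnSeries.embDomain_notin_range
    rintro ⟨m, hm⟩
    have : (m : ℤ) = n := hm
    omega
  · intro h
    refine ⟨PowerSeries.mk fun n => y.coeff n, ?_⟩
    ext n
    rcases lt_or_ge n 0 with hn | hn
    · rw [h n hn, HahnSeries.ofPowerSeries_apply]
      apply HahnSeries.embDomain_notin_range
      rintro ⟨m, hm⟩
      have : (m : ℤ) = n := hm
      omega
    · lift n to ℕ using hn
      rw [HahnSeries.ofPowerSeries_apply_coeff, PowerSeries.coeff_mk]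

lemma coeff_single_mul' {k : Type*} [Field k] (y : LaurentSeries k) (m n : ℤ) :
    ((HahnSeries.single m (1:k) : LaurentSeries k) * y).coeff n = y.coeff (n - m) := by
  have := HahnSeries.coeff_single_mul_add (r := (1:k)) (x := y) (a := n - m) (b := m)
  rw [sub_add_cancel, one_mul] at this
  exact this

lemma mem_mSet_iff {k : Type*} [Field k] (y : LaurentSeries k) :
    y ∈ mSet k ↔ ∀ n < (1:ℤ), y.coeff n = 0 := by
  constructor
  · rintro ⟨z, hz, rfl⟩ n hn
    rw [mem_Oset_iff] at hz
    rw [eps, coeff_single_mul']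
    exact hz _ (by omega)
  · intro h
    refine ⟨HahnSeries.single (-1) 1 * y, ?_, ?_⟩
    · rw [mem_Oset_iff]
      intro n hn
      rw [coeff_single_mul']
      exact h _ (by omega)
    · ext n
      rw [eps, coeff_single_mul', coeff_single_mul']
      congr 1
      omega

/-- The `k`-valued form given by the `n`-th coefficient of `Q`. -/
def coeffForm {k : Type*} [Field k] {D : ℕ}
    (Q : LinearMap.BilinForm (LaurentSeries k) (Fin D → LaurentSeries k)) (n : ℤ) :
    LinearMap.BilinForm k (Fin D → LaurentSeries k) :=
  LinearMap.mk₂ k (fun v w => (Q v w).coeff n)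
    (fun x y z => by simp) (fun c x y => by
      have : c • x = (HahnSeries.C c : LaurentSeries k) • x := by
        ext i; simp
      rw [this]; simp)
    (fun x y z => by simp) (fun c x y => by
      have : c • y = (HahnSeries.C c : LaurentSeries k) • y := by
        ext i; simp
      rw [this]; simp)

lemma parity_lat {k : Type*} [Field k] (h2 : (2:k) ≠ 0) {D : ℕ}
    (Q : LinearMap.BilinForm (LaurentSeries k) (Fin D → LaurentSeries k))
    (hsymm : ∀ x y, Q x y = Q y x) (t : ℤ)
    (A B C : Set (Fin D → LaurentSeries k))
    (hA : ∀ v, v ∈ A ↔ ∀ x ∈ A, ∀ n < t, (Q v x).coeff n = 0)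
    (hB : ∀ v, v ∈ B ↔ ∀ x ∈ B, ∀ n < t, (Q v x).coeff n = 0)
    (hC : ∀ v, v ∈ C ↔ ∀ x ∈ C, ∀ n < t, (Q v x).coeff n = 0)
    {a₁ a₂ a₃ : ℕ} {w₁ : Fin a₁ → (Fin D → LaurentSeries k)}
    {w₂ : Fin a₂ → (Fin D → LaurentSeries k)} {w₃ : Fin a₃ → (Fin D → LaurentSeries k)}
    (q₁ : IsQuotBasis (A ∩ B) A w₁) (q₂ : IsQuotBasis (A ∩ C) A w₂)
    (q₃ : IsQuotBasis (C ∩ B) C w₃) : Even (a₁ + a₂ + a₃) := by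
  have hsm : ∀ (c : k) (x : Fin D → LaurentSeries k),
      c • x = (HahnSeries.C c : LaurentSeries k) • x := by
    intro c x; ext i; simp
  have ex : ∀ E : Set (Fin D → LaurentSeries k),
      (∀ v, v ∈ E ↔ ∀ x ∈ E, ∀ n < t, (Q v x).coeff n = 0) →
      ∃ E' : Submodule k (Fin D → LaurentSeries k), (E' : Set _) = E ∧
        ∀ v, v ∈ E' ↔ ∀ x ∈ E', coeffForm Q (t - 1) v x = 0 := by
    intro E hE
    refine ⟨{ carrier := E
              add_mem' := ?_
              zero_mem' := ?_
              smul_mem' := ?_ }, rfl, ?_⟩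
    · intro a b ha hb
      rw [hE] at *
      intro x hx n hn
      simp [ha x hx n hn, hb x hx n hn]
    · rw [hE]
      intro x hx n hn
      simp
    · intro c a ha
      rw [hE] at *
      intro x hx n hn
      rw [hsm]
      simp [ha x hx n hn]
    · intro v
      change v ∈ E ↔ ∀ x ∈ E, (Q v x).coeff (t - 1) = 0
      constructor
      · intro hv x hx
        exact (hE v).1 hv x hx _ (by omega)
      · intro hv
        rw [hE]
        intro x hx n hn
        have hx' : (HahnSeries.single (t - 1 - n) (1:k) : LaurentSeries k) • x ∈ E := by
          rw [hE]
          intro y hy m hm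
          rw [map_smul, LinearMap.smul_apply, smul_eq_mul, coeff_single_mul']
          exact (hE x).1 hx y hy _ (by omega)
        have := hv _ hx'
        rw [map_smul, smul_eq_mul, coeff_single_mul'] at this
        convert this using 2
        omega
  obtain ⟨A, rfl, hA'⟩ := ex A hA
  obtain ⟨B, rfl, hB'⟩ := ex B hB
  obtain ⟨C, rfl, hC'⟩ := ex C hC
  have conv : ∀ (E G : Submodule k (Fin D → LaurentSeries k)) (a : ℕ)
      (w : Fin a → (Fin D → LaurentSeries k)),
      IsQuotBasis ((E : Set (Fin D → LaurentSeries k)) ∩ G) E w → QB (E ⊓ G) E w := by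
    intro E G a w h
    refine ⟨h.1, ?_, ?_⟩
    · intro x hx
      obtain ⟨c, hc⟩ := h.2.1 x hx
      refine ⟨c, ?_⟩
      simp only [hsm]
      exact hc
    · intro c hc
      simp only [hsm] at hc
      exact h.2.2 c hc
  refine parity_gen h2 (coeffForm Q (t - 1)) ?_ A B C hA' hB' hC' (conv _ _ _ _ q₁)
    (conv _ _ _ _ q₂) (conv _ _ _ _ q₃)
  intro x y
  change (Q x y).coeff _ = (Q y x).coeff _
  rw [hsymm]

end Helpers

/-- suppose `(M₀,L₀), (M,L) ∈ Z` satisfy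
`dim M/(M∩M₀) + dim L/(L∩L₀) = 1`.  Then for every `(M',L') ∈ Z` the quantity
`dim M'/(M'∩M₀) + dim M'/(M'∩M) + dim L'/(L'∩L₀) + dim L'/(L'∩L)` is odd. -/
theorem odd_codimension_sum {k : Type*} [Field k] [Fintype k]
    (hchar : ringChar k ≠ 2) {d : ℕ}
    (Q : LinearMap.BilinForm (LaurentSeries k) (Fin (2 * d) → LaurentSeries k))
    (hsymm : ∀ x y, Q x y = Q y x)
    (hgram : ∀ i j, Q (Pi.single i 1) (Pi.single j 1) =
      if (i : ℕ) + (j : ℕ) = 2 * d - 1 then 1 else 0)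
    (M₀ L₀ M L : Set (Fin (2 * d) → LaurentSeries k))
    (h₀ : InZ Q M₀ L₀) (h : InZ Q M L)
    (hone : ∃ (a b : ℕ) (w : Fin a → (Fin (2 * d) → LaurentSeries k))
      (w' : Fin b → (Fin (2 * d) → LaurentSeries k)),
      a + b = 1 ∧ IsQuotBasis (M ∩ M₀) M w ∧ IsQuotBasis (L ∩ L₀) L w') :
    ∀ M' L' : Set (Fin (2 * d) → LaurentSeries k), InZ Q M' L' →
      ∀ (a₁ a₂ a₃ a₄ : ℕ)
        (w₁ : Fin a₁ → (Fin (2 * d) → LaurentSeries k))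
        (w₂ : Fin a₂ → (Fin (2 * d) → LaurentSeries k))
        (w₃ : Fin a₃ → (Fin (2 * d) → LaurentSeries k))
        (w₄ : Fin a₄ → (Fin (2 * d) → LaurentSeries k)),
        IsQuotBasis (M' ∩ M₀) M' w₁ → IsQuotBasis (M' ∩ M) M' w₂ →
        IsQuotBasis (L' ∩ L₀) L' w₃ → IsQuotBasis (L' ∩ L) L' w₄ →
        Odd (a₁ + a₂ + a₃ + a₄) := by
  obtain ⟨a, b, w, w', hab, hw, hw'⟩ := hone
  intro M' L' h' a₁ a₂ a₃ a₄ w₁ w₂ w₃ w₄ q₁ q₂ q₃ q₄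
  have h2 : (2:k) ≠ 0 := Ring.two_ne_zero hchar
  have hm : ∀ M : Set (Fin (2 * d) → LaurentSeries k), mstar Q M = M →
      ∀ v, v ∈ M ↔ ∀ x ∈ M, ∀ n < (1:ℤ), (Q v x).coeff n = 0 := by
    intro M hM v
    conv_lhs => rw [← hM]
    exact forall₂_congr fun x _ => mem_mSet_iff _
  have hl : ∀ L : Set (Fin (2 * d) → LaurentSeries k), sharp Q L = L →
      ∀ v, v ∈ L ↔ ∀ x ∈ L, ∀ n < (0:ℤ), (Q v x).coeff n = 0 := by
    intro L hL v
    conv_lhs => rw [← hL]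
    exact forall₂_congr fun x _ => mem_Oset_iff _
  have e1 := parity_lat h2 Q hsymm 1 M' M₀ M (hm _ h'.2.2.1) (hm _ h₀.2.2.1) (hm _ h.2.2.1)
    q₁ q₂ hw
  have e2 := parity_lat h2 Q hsymm 0 L' L₀ L (hl _ h'.2.2.2.1) (hl _ h₀.2.2.2.1) (hl _ h.2.2.2.1)
    q₃ q₄ hw'
  rw [Nat.even_iff] at e1 e2
  rw [Nat.odd_iff]
  omega
end
end
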